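/- arXiv:2510.22259 — 8 statements merged into one kernel-verified Lean document; each statement's English description precedes it below -/
import Mathlib

section
/- Let s ≥ 3 be an integer and n = (2^{2s}+1)(2^s−1). Then: (i) the multiplicative order of 2 modulo n equals 4s; (ii) for every odd integer i with 1 ≤ i ≤ 2^s−1, the 2-cyclotomic coset C_i modulo n has cardinality 4s; and (iii) every such odd i is the coset leader of its 2-cyclotomic coset C_i. -/
open Finset

/-- The binary cyclic (BCH-type) code of length `n` over GF(2), consisting of all
words `c` such that `∑ i, c i • β ^ (j * i) = 0` for every `j` in the check set `J`. -/
def BCHCode {F : Type} [Field F] [Algebra (ZMod 2) F] (n : ℕ) (β : F) (J : Finset ℕ) :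
    Submodule (ZMod 2) (Fin n → ZMod 2) where
  carrier := {c | ∀ j ∈ J, ∑ i : Fin n, c i • β ^ (j * (i : ℕ)) = 0}
  add_mem' := by
    intro a b ha hb j hj
    simp only [Set.mem_setOf_eq, Pi.add_apply, add_smul, Finset.sum_add_distrib] at *
    rw [ha j hj, hb j hj, add_zero]
  zero_mem' := by
    intro j hj
    simp
  smul_mem' := by
    intro r c hc j hj
    simp only [Set.mem_setOf_eq, Pi.smul_apply, smul_assoc, ← Finset.smul_sum] at *
    rw [hc j hj, smul_zero]

/-- The (Euclidean) dual of a binary linear code. -/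
def dualCode {N : ℕ} (C : Submodule (ZMod 2) (Fin N → ZMod 2)) :
    Submodule (ZMod 2) (Fin N → ZMod 2) where
  carrier := {b | ∀ c ∈ C, ∑ i, b i * c i = 0}
  add_mem' := by
    intro a b ha hb c hc
    simp only [Set.mem_setOf_eq, Pi.add_apply, add_mul, Finset.sum_add_distrib] at *
    rw [ha c hc, hb c hc, add_zero]
  zero_mem' := by
    intro c hc
    simp
  smul_mem' := by
    intro r b hb c hc
    simp only [Set.mem_setOf_eq, Pi.smul_apply, smul_eq_mul, mul_assoc, ← Finset.mul_sum] at *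
    rw [hb c hc, mul_zero]

/-- The linear map appending an overall parity-check coordinate. -/
def extendMap (N : ℕ) : (Fin N → ZMod 2) →ₗ[ZMod 2] (Fin (N + 1) → ZMod 2) where
  toFun c := fun j => if h : (j : ℕ) < N then c ⟨j, h⟩ else ∑ i, c i
  map_add' a b := by
    funext j
    by_cases h : (j : ℕ) < N <;> simp [h, Finset.sum_add_distrib]
  map_smul' r c := by
    funext j
    by_cases h : (j : ℕ) < N <;> simp [h, Finset.mul_sum]

/-- The extended code of a binary linear code. -/
def extendedCode {N : ℕ} (C : Submodule (ZMod 2) (Fin N → ZMod 2)) :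
    Submodule (ZMod 2) (Fin (N + 1) → ZMod 2) :=
  C.map (extendMap N)

/-- The minimum distance (= minimum nonzero Hamming weight) of a binary linear code. -/
noncomputable def minDist {N : ℕ} (C : Submodule (ZMod 2) (Fin N → ZMod 2)) : ℕ :=
  sInf {w | ∃ c ∈ C, c ≠ 0 ∧ hammingNorm c = w}

/-- The number of codewords of Hamming weight `w` in a binary linear code. -/
noncomputable def weightCount {N : ℕ} (C : Submodule (ZMod 2) (Fin N → ZMod 2)) (w : ℕ) : ℕ :=
  Set.ncard {c : Fin N → ZMod 2 | c ∈ C ∧ hammingNorm c = w}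

/-- The 2-cyclotomic coset of `i` modulo `n`. -/
def cycCoset (n i : ℕ) : Set ℕ := {x | ∃ j : ℕ, x = i * 2 ^ j % n}

/-- The coset leader (smallest element) of the 2-cyclotomic coset of `i` modulo `n`. -/
noncomputable def cosetLeader (n i : ℕ) : ℕ := sInf (cycCoset n i)

lemma aux_pow (s n : ℕ) (hn : n = (2 ^ (2 * s) + 1) * (2 ^ s - 1)) :
    2 ^ (4 * s) ≡ 1 [MOD n] := by
  have h1 : 1 ≤ 2 ^ s := Nat.one_le_two_pow
  obtain ⟨q, hq⟩ := Nat.exists_eq_add_of_le h1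
  apply Nat.ModEq.symm
  rw [Nat.modEq_iff_dvd' Nat.one_le_two_pow]
  have e2 : 2 ^ (2 * s) = (1 + q) ^ 2 := by rw [mul_comm, pow_mul, hq]
  have e4 : 2 ^ (4 * s) = (1 + q) ^ 4 := by rw [mul_comm, pow_mul, hq]
  refine ⟨q + 2, ?_⟩
  rw [hn, e2, e4, hq, Nat.add_sub_cancel_left]
  apply Nat.sub_eq_of_eq_add
  ring

lemma aux_lt (s n : ℕ) (hs : 3 ≤ s) (hn : n = (2 ^ (2 * s) + 1) * (2 ^ s - 1))
    (i j : ℕ) (hi : i ≤ 2 ^ s - 1) (hj : j < 2 * s) : i * 2 ^ j < n := by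
  have h1 : 2 ^ 3 ≤ 2 ^ s := Nat.pow_le_pow_right (by norm_num) hs
  have h2 : 2 ^ j < 2 ^ (2 * s) + 1 := Nat.lt_succ_of_lt (Nat.pow_lt_pow_right (by norm_num) hj)
  rw [hn, mul_comm i]
  calc 2 ^ j * i ≤ 2 ^ j * (2 ^ s - 1) := Nat.mul_le_mul_left _ hi
    _ < _ := Nat.mul_lt_mul_of_pos_right h2 (by omega)

lemma aux_key (s n : ℕ) (hs : 3 ≤ s) (hn : n = (2 ^ (2 * s) + 1) * (2 ^ s - 1))
    (i j k : ℕ) (ho : Odd i) (hi : i ≤ 2 ^ s - 1) (hj0 : 0 < j) (hj : j < 4 * s)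
    (hk : k ≤ i) (h : i * 2 ^ j ≡ k [MOD n]) : False := by
  have hi0 : 0 < i := ho.pos
  have hin : i < n := by simpa using aux_lt s n hs hn i 0 hi (by omega)
  rcases lt_trichotomy j (2 * s) with hlt | heq | hgt
  · have e := Nat.ModEq.eq_of_lt_of_lt h (aux_lt s n hs hn i j hi hlt) (by omega)
    have : 2 ≤ 2 ^ j := by
      calc 2 = 2 ^ 1 := rfl
        _ ≤ 2 ^ j := Nat.pow_le_pow_right (by norm_num) hj0
    nlinarith
  · subst heq
    have h3 : i * 2 ^ (2 * s) + i ≡ k + i [MOD 2 ^ (2 * s) + 1] :=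
      (h.of_dvd ⟨2 ^ s - 1, hn⟩).add_right i
    have h4 : 2 ^ (2 * s) + 1 ∣ k + i := by
      have := (Nat.ModEq.dvd_iff h3 (dvd_refl _)).1 ⟨i, by ring⟩
      exact this
    have h5 := Nat.le_of_dvd (by omega) h4
    have h6 : 2 ^ (2 * s) = 2 ^ s * 2 ^ s := by rw [two_mul, pow_add]
    have h1 : 2 ^ 3 ≤ 2 ^ s := Nat.pow_le_pow_right (by norm_num) hs
    have h7 : i < 2 ^ s := by omega
    nlinarith
  · have h3 := h.mul_right (2 ^ (4 * s - j))
    rw [mul_assoc, ← pow_add, Nat.add_sub_cancel' hj.le] at h3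
    have h4 := ((aux_pow s n hn).mul_left i).symm.trans h3
    rw [mul_one] at h4
    have e := Nat.ModEq.eq_of_lt_of_lt h4 hin
      (aux_lt s n hs hn k _ (by omega) (by omega))
    rw [e] at ho
    have : Even (k * 2 ^ (4 * s - j)) := by
      apply Even.mul_left
      exact (Nat.even_pow.2 ⟨even_two, by omega⟩)
    exact (Nat.not_even_iff_odd.2 ho) this

lemma aux_cop (s n : ℕ) (hs : 3 ≤ s) (hn : n = (2 ^ (2 * s) + 1) * (2 ^ s - 1)) (j : ℕ) :
    Nat.gcd n (2 ^ j) = 1 := by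
  have h := aux_pow s n hn
  have h1 : Nat.gcd (2 ^ (4 * s)) n = 1 := by rw [h.gcd_eq]; simp
  have h2 : Nat.Coprime 2 n := (Nat.coprime_pow_left_iff (by omega) _ _).1 h1
  exact (h2.pow_left j).symm

lemma aux_red (s n : ℕ) (hn : n = (2 ^ (2 * s) + 1) * (2 ^ s - 1)) (i j : ℕ) :
    i * 2 ^ j ≡ i * 2 ^ (j % (4 * s)) [MOD n] := by
  apply Nat.ModEq.mul_left
  conv_lhs => rw [← Nat.mod_add_div j (4 * s), pow_add, pow_mul]
  simpa using ((aux_pow s n hn).pow (j / (4 * s))).mul_left (2 ^ (j % (4 * s)))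

theorem stmt_0 (s : ℕ) (hs : 3 ≤ s) (n : ℕ)
    (hn : n = (2 ^ (2 * s) + 1) * (2 ^ s - 1)) :
    orderOf (2 : ZMod n) = 4 * s ∧
    ∀ i : ℕ, Odd i → 1 ≤ i → i ≤ 2 ^ s - 1 →
      (cycCoset n i).ncard = 4 * s ∧ cosetLeader n i = i := by
  have h4s : 0 < 4 * s := by omega
  have h1Q : 1 ≤ 2 ^ s - 1 := by
    have h1 : 2 ^ 3 ≤ 2 ^ s := Nat.pow_le_pow_right (by norm_num) hs
    omega
  refine ⟨?_, ?_⟩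
  · have hp : (2 : ZMod n) ^ (4 * s) = 1 := by
      have := (ZMod.natCast_eq_natCast_iff _ _ _).2 (aux_pow s n hn)
      simpa using this
    have hd := orderOf_dvd_of_pow_eq_one hp
    have hpos : 0 < orderOf (2 : ZMod n) := Nat.pos_of_dvd_of_pos hd h4s
    rcases (Nat.le_of_dvd h4s hd).eq_or_lt with h | h
    · exact h
    · exfalso
      refine aux_key s n hs hn 1 (orderOf (2 : ZMod n)) 1 odd_one h1Q hpos h le_rfl ?_
      rw [← ZMod.natCast_eq_natCast_iff]
      simpa using pow_orderOf_eq_one (2 : ZMod n)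
  · intro i ho hi1 hi
    have hin : i < n := by simpa using aux_lt s n hs hn i 0 hi (by omega)
    constructor
    · have himg : cycCoset n i = (fun j => i * 2 ^ j % n) '' (Set.Iio (4 * s)) := by
        ext x
        constructor
        · rintro ⟨j, rfl⟩
          exact ⟨j % (4 * s), Nat.mod_lt _ h4s, (aux_red s n hn i j).symm⟩
        · rintro ⟨j, -, rfl⟩
          exact ⟨j, rfl⟩
      have key : ∀ a b : ℕ, a < b → b < 4 * s → i * 2 ^ a % n = i * 2 ^ b % n → False := by
        intro a b hab hb h
        have h1 : i * 2 ^ a ≡ i * 2 ^ (b - a) * 2 ^ a [MOD n] := by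
          rw [mul_assoc, ← pow_add, Nat.sub_add_cancel hab.le]
          exact h
        have h2 := Nat.ModEq.cancel_right_of_coprime (aux_cop s n hs hn a) h1
        exact aux_key s n hs hn i (b - a) i ho hi (by omega) (by omega) le_rfl h2.symm
      have hinj : Set.InjOn (fun j => i * 2 ^ j % n) (Set.Iio (4 * s)) := by
        intro a ha b hb h
        rcases lt_trichotomy a b with hlt | heq | hgt
        · exact (key a b hlt hb h).elim
        · exact heq
        · exact (key b a hgt ha h.symm).elim
      rw [himg, Set.ncard_image_of_injOn hinj]
      rw [← Finset.coe_Iio, Set.ncard_coe_finset]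
      simp
    · have hmem : i ∈ cycCoset n i := ⟨0, by simp [Nat.mod_eq_of_lt hin]⟩
      refine le_antisymm (Nat.sInf_le hmem) (le_csInf ⟨i, hmem⟩ ?_)
      rintro x ⟨j, rfl⟩
      by_contra! hlt
      have hr := aux_red s n hn i j
      rcases Nat.eq_zero_or_pos (j % (4 * s)) with h0 | h0
      · rw [h0, pow_zero, mul_one] at hr
        have : i * 2 ^ j % n = i := by
          have h' : i * 2 ^ j % n = i % n := hr
          rw [h', Nat.mod_eq_of_lt hin]
        omega
      · exact aux_key s n hs hn i (j % (4 * s)) (i * 2 ^ j % n) ho hi h0 (Nat.mod_lt _ h4s)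
          hlt.le (hr.symm.trans (Nat.mod_modEq _ _).symm)
end

section
/- Let s ≥ 2. The binary code C_{(2,n,3,1)} has length n, dimension n − 4s over GF(2), and minimum distance exactly 3. -/
open Finset

lemma zmod2_smul_aux {F : Type} [Field F] [Algebra (ZMod 2) F] (a : ZMod 2) (x : F) :
    a • x = if a ≠ 0 then x else 0 := by
  have h : a = 0 ∨ a = 1 := by revert a; decide
  rcases h with h | h <;> subst h <;> simp

lemma code_sum_aux {F : Type} [Field F] [Algebra (ZMod 2) F] (n : ℕ) (β : F)
    (c : Fin n → ZMod 2) :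
    c ∈ BCHCode n β {1} ↔ ∑ i ∈ Finset.univ.filter (fun i => c i ≠ 0), β ^ (i : ℕ) = 0 := by
  have h1 : c ∈ BCHCode n β {1} ↔ ∀ j ∈ ({1} : Finset ℕ), ∑ i : Fin n, c i • β ^ (j * (i : ℕ)) = 0 :=
    Iff.rfl
  rw [h1]
  simp only [Finset.mem_singleton, forall_eq, one_mul, zmod2_smul_aux, Finset.sum_filter]

lemma minDist_aux {F : Type} [Field F] [Algebra (ZMod 2) F] [CharP F 2] (n k i : ℕ) (β : F)
    (hβ : IsPrimitiveRoot β n) (hk : k < n) (hi : i < n) (hk0 : k ≠ 0) (hi0 : i ≠ 0) (hik : i ≠ k)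
    (h : β ^ i = 1 + β ^ k) : minDist (BCHCode n β {1}) = 3 := by
  have hn : 0 < n := by omega
  have hβ0 : β ≠ 0 := hβ.ne_zero (by omega)
  unfold minDist
  apply le_antisymm
  · apply Nat.sInf_le
    let S : Finset (Fin n) := {⟨0, hn⟩, ⟨k, hk⟩, ⟨i, hi⟩}
    have hS : S.card = 3 := by
      rw [Finset.card_eq_three]
      refine ⟨_, _, _, ?_, ?_, ?_, rfl⟩ <;> simp <;> omega
    let c : Fin n → ZMod 2 := fun j => if j ∈ S then 1 else 0
    have hc : Finset.univ.filter (fun j => c j ≠ 0) = S := by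
      ext j; simp [c]
    have hw : hammingNorm c = 3 := by
      unfold hammingNorm; rw [hc, hS]
    refine ⟨c, ?_, ?_, hw⟩
    · rw [code_sum_aux, hc]
      rw [Finset.sum_insert, Finset.sum_insert, Finset.sum_singleton]
      · simp only [pow_zero]
        rw [h, ← add_assoc]
        exact CharTwo.add_self_eq_zero _
      · simp; omega
      · simp; omega
    · rintro h0
      rw [h0] at hw
      simp at hw
  · apply le_csInf
    · by_contra hne
      rw [Set.not_nonempty_iff_eq_empty] at hne
      let S : Finset (Fin n) := {⟨0, hn⟩, ⟨k, hk⟩, ⟨i, hi⟩}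
      let c : Fin n → ZMod 2 := fun j => if j ∈ S then 1 else 0
      have hc : Finset.univ.filter (fun j => c j ≠ 0) = S := by
        ext j; simp [c]
      have : hammingNorm c ∈ {w | ∃ c ∈ BCHCode n β {1}, c ≠ 0 ∧ hammingNorm c = w} := by
        refine ⟨c, ?_, ?_, rfl⟩
        · rw [code_sum_aux, hc]
          rw [Finset.sum_insert, Finset.sum_insert, Finset.sum_singleton]
          · simp only [pow_zero]
            rw [h, ← add_assoc]
            exact CharTwo.add_self_eq_zero _
          · simp; omega
          · simp; omega
        · intro h0
          have := congrFun h0 ⟨0, hn⟩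
          simp [c, S] at this
      rw [hne] at this
      exact this
    · rintro w ⟨c, hc, hc0, rfl⟩
      rw [code_sum_aux] at hc
      by_contra hlt
      have hpos : hammingNorm c ≠ 0 := by simpa using hc0
      have h12 : hammingNorm c = 1 ∨ hammingNorm c = 2 := by omega
      unfold hammingNorm at h12
      rcases h12 with h1 | h2
      · obtain ⟨a, ha⟩ := Finset.card_eq_one.1 h1
        rw [ha, Finset.sum_singleton] at hc
        exact pow_ne_zero _ hβ0 hc
      · obtain ⟨a, b, hab, hS⟩ := Finset.card_eq_two.1 h2
        rw [hS, Finset.sum_pair hab] at hc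
        have := CharTwo.add_eq_zero.1 hc
        exact hab (Fin.ext (hβ.pow_inj a.2 b.2 this))

lemma dim_aux {F : Type} [Field F] [Finite F] [Algebra (ZMod 2) F] (n m : ℕ) (β : F)
    (hm : Module.finrank (ZMod 2) F = 2 * m) (hm0 : 0 < m) (hmn : 2 ^ m ≤ n)
    (hβ : IsPrimitiveRoot β n) :
    Module.finrank (ZMod 2) (BCHCode n β {1}) = n - 2 * m := by
  have hn : 0 < n := lt_of_lt_of_le (by positivity) hmn
  have hβ0 : β ≠ 0 := hβ.ne_zero (by omega)
  haveI : Module.Finite (ZMod 2) F := Module.Finite.of_finite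
  let K := IntermediateField.adjoin (ZMod 2) {β}
  have hK : K = ⊤ := by
    have hdvd : Module.finrank (ZMod 2) K * Module.finrank K F = 2 * m := by
      rw [Module.finrank_mul_finrank, hm]
    let b : K := ⟨β, IntermediateField.mem_adjoin_simple_self _ _⟩
    have hb0 : b ≠ 0 := fun h => hβ0 (congrArg Subtype.val h)
    haveI : Fintype K := Fintype.ofFinite _
    have hcard : Fintype.card K = 2 ^ Module.finrank (ZMod 2) K := by
      rw [Module.card_eq_pow_finrank (K := ZMod 2), ZMod.card]
    have hb : b ^ (Fintype.card K - 1) = 1 := FiniteField.pow_card_sub_one_eq_one b hb0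
    have hb' : β ^ (Fintype.card K - 1) = 1 := congrArg Subtype.val hb
    have hd := hβ.dvd_of_pow_eq_one _ hb'
    have hle := Nat.le_of_dvd (by have := Fintype.one_lt_card (α := K); omega) hd
    have hlt : 2 ^ m < 2 ^ Module.finrank (ZMod 2) K := by
      have := Fintype.one_lt_card (α := K); omega
    have hlt' := (Nat.pow_lt_pow_iff_right (by norm_num)).1 hlt
    have h1 : Module.finrank K F = 1 := by
      have : 0 < Module.finrank K F := Nat.pos_of_ne_zero (by rintro h; rw [h] at hdvd; omega)
      by_contra hne
      have : 2 ≤ Module.finrank K F := by omega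
      nlinarith
    exact IntermediateField.finrank_eq_one_iff_eq_top.1 h1
  let f : (Fin n → ZMod 2) →ₗ[ZMod 2] F := Fintype.linearCombination (ZMod 2) (fun i : Fin n => β ^ (i : ℕ))
  have hker : BCHCode n β {1} = LinearMap.ker f := by
    ext c
    have h1 : c ∈ BCHCode n β {1} ↔ ∀ j ∈ ({1} : Finset ℕ), ∑ i : Fin n, c i • β ^ (j * (i : ℕ)) = 0 :=
      Iff.rfl
    rw [h1]
    simp [f, Fintype.linearCombination_apply]
  have hpow : ∀ j : ℕ, β ^ j ∈ LinearMap.range f := by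
    intro j
    refine ⟨Pi.single ⟨j % n, Nat.mod_lt _ hn⟩ 1, ?_⟩
    simp only [f, Fintype.linearCombination_apply_single, one_smul]
    exact (pow_eq_pow_mod j hβ.pow_eq_one).symm
  have hrange : LinearMap.range f = ⊤ := by
    rw [eq_top_iff]
    rintro x -
    have hx : x ∈ K.toSubalgebra := by rw [hK]; trivial
    rw [IntermediateField.adjoin_simple_toSubalgebra_of_isAlgebraic (Algebra.IsAlgebraic.isAlgebraic β),
      Algebra.adjoin_singleton_eq_range_aeval] at hx
    obtain ⟨p, rfl⟩ := hx
    change Polynomial.aeval β p ∈ _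
    rw [Polynomial.aeval_eq_sum_range]
    exact Submodule.sum_mem _ fun i _ => Submodule.smul_mem _ _ (hpow i)
  have := LinearMap.finrank_range_add_finrank_ker f
  rw [hrange, finrank_top, hm, Module.finrank_fin_fun] at this
  rw [hker]; omega

theorem stmt_1 (s : ℕ) (hs : 2 ≤ s) (n : ℕ) (hn : n = (2 ^ (2 * s) + 1) * (2 ^ s - 1))
    (α : GaloisField 2 (4 * s)) (hα : orderOf α = 2 ^ (4 * s) - 1)
    (β : GaloisField 2 (4 * s)) (hβ : β = α ^ (2 ^ s + 1)) :
    Module.finrank (ZMod 2) (BCHCode n β {1}) = n - 4 * s ∧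
    minDist (BCHCode n β {1}) = 3 := by
  haveI : Finite (GaloisField 2 (4 * s)) := inferInstance
  have hq4 : 4 ≤ 2 ^ s := by
    calc 4 = 2 ^ 2 := by norm_num
      _ ≤ 2 ^ s := Nat.pow_le_pow_right (by norm_num) hs
  obtain ⟨r, hr⟩ : ∃ r, 2 ^ s = r + 1 := ⟨2 ^ s - 1, by omega⟩
  have h2s : 2 ^ (2 * s) = (2 ^ s) ^ 2 := by rw [mul_comm, pow_mul]
  have h4s : 2 ^ (4 * s) = (2 ^ s) ^ 4 := by rw [mul_comm, pow_mul]
  have hr3 : 3 ≤ r := by omega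
  have hn' : n = (2 ^ (2 * s) + 1) * r := by rw [hn, hr]; simp
  have hord : 2 ^ (4 * s) - 1 = (2 ^ s + 1) * n := by
    rw [hn', h4s, h2s, hr]
    apply Nat.sub_eq_of_eq_add
    ring
  have hnpos : 0 < n := by rw [hn']; positivity
  have hαp : IsPrimitiveRoot α (2 ^ (4 * s) - 1) := hα ▸ IsPrimitiveRoot.orderOf α
  have hprim : IsPrimitiveRoot β n := by
    rw [hβ]
    exact hαp.pow (by rw [hord]; positivity) hord
  refine ⟨?_, ?_⟩
  · have := dim_aux n (2 * s) β (by rw [GaloisField.finrank 2 (by omega)]; ring) (by omega)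
      (by rw [hn']; nlinarith [Nat.zero_le (2 ^ (2 * s))]) hprim
    rw [this]; congr 1; ring
  · set k := 2 ^ (2 * s) + 1 with hk
    have hkpos : 0 < k := by omega
    have hγ : IsPrimitiveRoot (β ^ k) r := hprim.pow hnpos hn'
    have hγ1 : β ^ k ≠ 1 := hγ.ne_one (by omega)
    have hγq : (β ^ k) ^ (2 ^ s) = β ^ k := by
      rw [hr, pow_succ, hγ.pow_eq_one, one_mul]
    have h0 : 1 + β ^ k ≠ 0 := fun h => hγ1 (CharTwo.add_eq_zero.1 h).symm
    have hfix : (1 + β ^ k) ^ (2 ^ s) = 1 + β ^ k := by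
      rw [add_pow_char_pow, one_pow, hγq]
    have hr1 : (1 + β ^ k) ^ r = 1 := by
      rw [hr, pow_succ] at hfix
      exact mul_right_cancel₀ h0 (by rw [hfix, one_mul])
    have hn1 : (1 + β ^ k) ^ n = 1 := by
      rw [hn', mul_comm k r, pow_mul, hr1, one_pow]
    haveI : NeZero n := ⟨by omega⟩
    obtain ⟨i, hi, h⟩ := hprim.eq_pow_of_pow_eq_one hn1
    refine minDist_aux n k i β hprim (by rw [hn']; nlinarith) hi (by omega) ?_ ?_ h
    · rintro rfl
      rw [pow_zero] at h
      exact pow_ne_zero k (hprim.ne_zero (by omega)) (by simpa using h.symm)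
    · rintro rfl
      simp at h
end

section
/- Let s ≥ 2. The dual code C_{(2,n,3,1)}^⊥ has dimension 4s and minimum distance 2^{3s−1} − 2^{2s−1}; moreover it contains exactly 2^{4s} − 1 − n codewords of Hamming weight 2^{3s−1} − 2^{2s−1}, exactly n codewords of Hamming weight 2^{3s−1}, the zero codeword, and no codewords of any other weight. -/
open Finset

section Helpers

/-- sign of a bit -/
def sgn (z : ZMod 2) : ℤ := if z = 0 then 1 else -1

lemma sgn_add (a b : ZMod 2) : sgn (a + b) = sgn a * sgn b := by
  revert a b; decide

lemma sgn_sq (a : ZMod 2) : sgn a * sgn a = 1 := by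
  revert a; decide

variable {F : Type} [Field F] [Fintype F] [Algebra (ZMod 2) F]

lemma tr_pow (x : F) (k : ℕ) :
    Algebra.trace (ZMod 2) F (x ^ 2 ^ k) = Algebra.trace (ZMod 2) F x := by
  induction k with
  | zero => simp
  | succ k ih =>
    rw [pow_succ, pow_mul]
    have := Algebra.trace_eq_of_algEquiv
      (FiniteField.frobeniusAlgEquivOfAlgebraic (ZMod 2) F) (x ^ 2 ^ k)
    rw [← ih, ← this]
    simp [FiniteField.coe_frobeniusAlgEquivOfAlgebraic, ZMod.card]

lemma char_two : CharP F 2 := charP_of_injective_algebraMap (algebraMap (ZMod 2) F).injective 2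

lemma finrank_F (s : ℕ) (hc : Fintype.card F = 2 ^ (4 * s)) :
    Module.finrank (ZMod 2) F = 4 * s := by
  have := Module.card_eq_pow_finrank (K := ZMod 2) (V := F)
  rw [hc, ZMod.card] at this
  exact (Nat.pow_right_injective (le_refl 2) this).symm

lemma tr_sub (s : ℕ) (hc : Fintype.card F = 2 ^ (4 * s)) (x : F) (hx : x ^ 2 ^ s = x) :
    Algebra.trace (ZMod 2) F x = 0 := by
  haveI := char_two (F := F)
  apply (algebraMap (ZMod 2) F).injective
  rw [FiniteField.algebraMap_trace_eq_sum_pow, finrank_F s hc, map_zero, Nat.card_zmod]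
  have h : ∀ i, x ^ 2 ^ (s + i) = x ^ 2 ^ i := by
    intro i; rw [pow_add, pow_mul, hx]
  have h4 : 4 * s = s + (s + (s + s)) := by ring
  rw [h4]
  simp only [Finset.sum_range_add, h]
  have h2 : ∀ z : F, z + (z + (z + z)) = 0 := by
    intro z; rw [CharTwo.add_self_eq_zero z, add_zero, CharTwo.add_self_eq_zero]
  exact h2 _

lemma tr_nondeg (w : F) (h : ∀ y, Algebra.trace (ZMod 2) F (w * y) = 0) : w = 0 := by
  apply (traceForm_nondegenerate (ZMod 2) F).1 w
  intro y; rw [Algebra.traceForm_apply]; exact h y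

lemma sum_sgn [DecidableEq F] (w : F) :
    ∑ y : F, sgn (Algebra.trace (ZMod 2) F (w * y)) = if w = 0 then (Fintype.card F : ℤ) else 0 := by
  split_ifs with h
  · simp [h, sgn]
  · have : ∃ y0, Algebra.trace (ZMod 2) F (w * y0) ≠ 0 := by
      by_contra! hh
      exact h (tr_nondeg w hh)
    obtain ⟨y0, hy0⟩ := this
    have h1 := Equiv.sum_comp (Equiv.addRight y0)
      (fun y => sgn (Algebra.trace (ZMod 2) F (w * y)))
    simp only [Equiv.coe_addRight, mul_add, map_add, sgn_add] at h1
    rw [← Finset.sum_mul] at h1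
    have h2 : sgn (Algebra.trace (ZMod 2) F (w * y0)) = -1 := by simp [sgn, hy0]
    rw [h2] at h1
    linarith

/-- the quadratic exponential sum -/
noncomputable def qS (F : Type) [Field F] [Fintype F] [Algebra (ZMod 2) F] (s : ℕ) (a : F) : ℤ :=
  ∑ x : F, sgn (Algebra.trace (ZMod 2) F (a * x ^ (2 ^ s + 1)))

lemma qS_sq [DecidableEq F] (s : ℕ) (hc : Fintype.card F = 2 ^ (4 * s)) (a : F) :
    qS F s a ^ 2 = 2 ^ (4 * s) *
      ∑ x : F with a * x = (a * x ^ 2 ^ s) ^ 2 ^ s,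
        sgn (Algebra.trace (ZMod 2) F (a * x ^ (2 ^ s + 1))) := by
  haveI := char_two (F := F)
  have hfull : ∀ z : F, z ^ 2 ^ (4 * s) = z := fun z => by rw [← hc]; exact FiniteField.pow_card z
  have key : ∀ x y : F, Algebra.trace (ZMod 2) F (a * (x + y) ^ (2 ^ s + 1)) =
      Algebra.trace (ZMod 2) F (a * x ^ (2 ^ s + 1)) +
      Algebra.trace (ZMod 2) F ((a * x ^ 2 ^ s + (a * x) ^ 2 ^ (3 * s)) * y) +
      Algebra.trace (ZMod 2) F (a * y ^ (2 ^ s + 1)) := by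
    intro x y
    have e1 : Algebra.trace (ZMod 2) F ((a * x) ^ 2 ^ (3 * s) * y) =
        Algebra.trace (ZMod 2) F (a * x * y ^ 2 ^ s) := by
      rw [← tr_pow (a * x * y ^ 2 ^ s) (3 * s)]
      congr 1
      rw [mul_pow (a * x) (y ^ 2 ^ s), ← pow_mul y, ← pow_add, show s + 3 * s = 4 * s by ring, hfull]
    rw [add_mul, map_add, e1, ← map_add, ← map_add, ← map_add]
    congr 1
    rw [pow_succ, add_pow_char_pow]
    ring
  have w0 : ∀ x : F, a * x ^ 2 ^ s + (a * x) ^ 2 ^ (3 * s) = 0 ↔ a * x = (a * x ^ 2 ^ s) ^ 2 ^ s := by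
    intro x
    rw [CharTwo.add_eq_zero]
    constructor
    · intro h
      rw [h, ← pow_mul, ← pow_add, show 3 * s + s = 4 * s by ring, hfull]
    · intro h
      rw [h, ← pow_mul, ← pow_add, show s + 3 * s = 4 * s by ring, hfull]
  calc qS F s a ^ 2 = ∑ y : F, ∑ x : F, sgn (Algebra.trace (ZMod 2) F (a * x ^ (2 ^ s + 1))) *
          sgn (Algebra.trace (ZMod 2) F (a * y ^ (2 ^ s + 1))) := by
        rw [pow_two, qS, Finset.sum_mul_sum, Finset.sum_comm]
    _ = ∑ y : F, ∑ x : F, sgn (Algebra.trace (ZMod 2) F (a * (x + y) ^ (2 ^ s + 1))) *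
          sgn (Algebra.trace (ZMod 2) F (a * y ^ (2 ^ s + 1))) := by
        refine Finset.sum_congr rfl fun y _ => ?_
        exact (Equiv.sum_comp (Equiv.addRight y) (fun x =>
          sgn (Algebra.trace (ZMod 2) F (a * x ^ (2 ^ s + 1))) *
          sgn (Algebra.trace (ZMod 2) F (a * y ^ (2 ^ s + 1))))).symm
    _ = ∑ x : F, sgn (Algebra.trace (ZMod 2) F (a * x ^ (2 ^ s + 1))) *
        ∑ y : F, sgn (Algebra.trace (ZMod 2) F ((a * x ^ 2 ^ s + (a * x) ^ 2 ^ (3 * s)) * y)) := by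
        rw [Finset.sum_comm]
        refine Finset.sum_congr rfl fun x _ => ?_
        rw [Finset.mul_sum]
        refine Finset.sum_congr rfl fun y _ => ?_
        rw [key, sgn_add, sgn_add, mul_assoc, sgn_sq, mul_one]
    _ = _ := by
        simp only [sum_sgn, w0, hc]
        rw [Finset.mul_sum, Finset.sum_filter]
        refine Finset.sum_congr rfl fun x _ => ?_
        split_ifs
        · push_cast; ring
        · simp

variable {s : ℕ} {α : F}

lemma exists_pow (hc : Fintype.card F = 2 ^ (4 * s)) (hα : orderOf α = 2 ^ (4 * s) - 1)
    [DecidableEq F] :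
    (Finset.range (2 ^ (4 * s) - 1)).image (fun k => α ^ k) = Finset.univ.erase 0 ∧
    Set.InjOn (fun k => α ^ k) (Finset.range (2 ^ (4 * s) - 1) : Set ℕ) ∧ α ≠ 0 := by
  have hα0 : α ≠ 0 := by
    rintro rfl
    have h1 : orderOf (0 : F) = 0 := orderOf_zero F
    rw [h1] at hα
    have := Fintype.one_lt_card (α := F)
    omega
  have hinj : Set.InjOn (fun k => α ^ k) (Finset.range (2 ^ (4 * s) - 1) : Set ℕ) := by
    intro i hi j hj h
    simp only [Finset.coe_range, Set.mem_Iio] at hi hj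
    rw [← hα] at hi hj
    exact pow_injOn_Iio_orderOf hi hj h
  refine ⟨?_, hinj, hα0⟩
  apply Finset.eq_of_subset_of_card_le
  · intro x hx
    simp only [Finset.mem_image] at hx
    obtain ⟨k, _, rfl⟩ := hx
    simp [hα0]
  · rw [Finset.card_image_of_injOn hinj, Finset.card_erase_of_mem (Finset.mem_univ _),
      Finset.card_univ, hc, Finset.card_range]

lemma sum_range_periodic (f : ℕ → ℤ) (n m : ℕ) (hf : ∀ i, f (n + i) = f i) :
    ∑ k ∈ Finset.range (m * n), f k = m * ∑ k ∈ Finset.range n, f k := by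
  induction m with
  | zero => simp
  | succ m ih =>
    rw [add_mul, one_mul, add_comm, Finset.sum_range_add]
    simp only [hf]
    rw [ih]; push_cast; ring

lemma n_mul (s : ℕ) : (2 ^ s + 1) * ((2 ^ (2 * s) + 1) * (2 ^ s - 1)) = 2 ^ (4 * s) - 1 := by
  have h : 1 ≤ 2 ^ s := Nat.one_le_two_pow
  have h' : 1 ≤ 2 ^ (4 * s) := Nat.one_le_two_pow
  zify [h, h']
  rw [mul_comm 2 s, mul_comm 4 s, pow_mul, pow_mul]; ring

lemma beta_order (hα : orderOf α = 2 ^ (4 * s) - 1) (hs : 2 ≤ s) :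
    orderOf (α ^ (2 ^ s + 1)) = (2 ^ (2 * s) + 1) * (2 ^ s - 1) := by
  rw [orderOf_pow_of_dvd (by positivity) (by rw [hα, ← n_mul]; exact dvd_mul_right _ _), hα, ← n_mul,
    Nat.mul_div_cancel_left _ (by positivity)]

lemma qS_eq [DecidableEq F] (hc : Fintype.card F = 2 ^ (4 * s)) (hα : orderOf α = 2 ^ (4 * s) - 1)
    (hs : 2 ≤ s) (a : F) : qS F s a = 1 + (2 ^ s + 1) *
      ∑ i ∈ Finset.range ((2 ^ (2 * s) + 1) * (2 ^ s - 1)),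
        sgn (Algebra.trace (ZMod 2) F (a * (α ^ (2 ^ s + 1)) ^ i)) := by
  obtain ⟨h1, h2, h3⟩ := exists_pow hc hα
  rw [qS, ← Finset.add_sum_erase _ _ (Finset.mem_univ (0 : F)), ← h1, Finset.sum_image h2, ← n_mul]
  congr 1
  · simp [sgn]
  · have := sum_range_periodic (fun i => sgn (Algebra.trace (ZMod 2) F (a * (α ^ (2 ^ s + 1)) ^ i)))
      ((2 ^ (2 * s) + 1) * (2 ^ s - 1)) (2 ^ s + 1) (by
        intro i
        rw [pow_add, ← beta_order hα hs, pow_orderOf_eq_one, one_mul])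
    push_cast at this
    rw [← this]
    refine Finset.sum_congr rfl fun k _ => ?_
    rw [← pow_mul, ← pow_mul, mul_comm k]

lemma qS_one_shift (hα0 : α ≠ 0) (i : ℕ) : qS F s ((α ^ (2 ^ s + 1)) ^ i) = qS F s 1 := by
  rw [qS, qS, ← Equiv.sum_comp (Equiv.mulLeft₀ (α ^ i) (pow_ne_zero _ hα0))
    (fun x => sgn (Algebra.trace (ZMod 2) F (1 * x ^ (2 ^ s + 1))))]
  refine Finset.sum_congr rfl fun k _ => ?_
  simp only [Equiv.mulLeft₀_apply, one_mul]
  rw [mul_pow, ← pow_mul, ← pow_mul, mul_comm i]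

lemma card_fix [DecidableEq F] (hα : orderOf α = 2 ^ (4 * s) - 1) (hs : 2 ≤ s) :
    (Finset.univ.filter (fun x : F => x ^ 2 ^ (2 * s) = x)).card = 2 ^ (2 * s) := by
  have hf : 2 ^ (4 * s) - 1 = (2 ^ (2 * s) + 1) * (2 ^ (2 * s) - 1) := by
    rw [← Nat.sq_sub_sq, ← pow_mul]; congr 2; ring
  have h2 : 1 < 2 ^ (2 * s) := Nat.one_lt_two_pow (by omega)
  have hp : IsPrimitiveRoot (α ^ (2 ^ (2 * s) + 1)) (2 ^ (2 * s) - 1) := by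
    have := IsPrimitiveRoot.orderOf α
    rw [hα] at this
    exact this.pow (by rw [hf]; exact Nat.mul_pos (by omega) (by omega)) hf
  have : Finset.univ.filter (fun x : F => x ^ 2 ^ (2 * s) = x) =
      insert 0 (Polynomial.nthRootsFinset (2 ^ (2 * s) - 1) (1 : F)) := by
    ext x
    simp only [Finset.mem_filter, Finset.mem_univ, true_and, Finset.mem_insert]
    rw [Polynomial.mem_nthRootsFinset (by omega)]
    by_cases hx : x = 0
    · simp [hx]
    · simp only [hx, false_or]
      have : x ^ 2 ^ (2 * s) = x ^ (2 ^ (2 * s) - 1) * x := by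
        rw [← pow_succ]; congr 1; omega
      rw [this]
      exact mul_eq_right₀ hx
  rw [this, Finset.card_insert_of_notMem, hp.card_nthRootsFinset]
  · omega
  · rw [Polynomial.mem_nthRootsFinset (by omega), zero_pow (by omega)]
    exact zero_ne_one

lemma qS_one_sq [DecidableEq F] (hc : Fintype.card F = 2 ^ (4 * s))
    (hα : orderOf α = 2 ^ (4 * s) - 1) (hs : 2 ≤ s) : qS F s 1 ^ 2 = (2 ^ (3 * s)) ^ 2 := by
  rw [qS_sq s hc]
  have e : ∀ x : F, (x ^ 2 ^ s) ^ 2 ^ s = x ^ 2 ^ (2 * s) := by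
    intro x; rw [← pow_mul, ← pow_add]; congr 2; ring
  have : ∀ x ∈ Finset.univ.filter (fun x : F => 1 * x = (1 * x ^ 2 ^ s) ^ 2 ^ s),
      sgn (Algebra.trace (ZMod 2) F (1 * x ^ (2 ^ s + 1))) = 1 := by
    intro x hx
    simp only [Finset.mem_filter, Finset.mem_univ, true_and, one_mul] at hx
    have : Algebra.trace (ZMod 2) F (1 * x ^ (2 ^ s + 1)) = 0 := by
      apply tr_sub s hc
      rw [one_mul, pow_succ, mul_pow, ← hx, mul_comm]
    rw [this]; rfl
  rw [Finset.sum_congr rfl this]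
  simp only [one_mul, e, Finset.sum_const, nsmul_eq_mul, mul_one]
  have h := card_fix hα hs
  simp only [eq_comm (b := (_ : F) ^ 2 ^ (2 * s))]
  rw [h]
  push_cast
  rw [← pow_add, ← pow_mul]; congr 1; ring

lemma qS_other_sq [DecidableEq F] (hc : Fintype.card F = 2 ^ (4 * s))
    (hα : orderOf α = 2 ^ (4 * s) - 1) (hs : 2 ≤ s) (a : F) (ha : a ≠ 0)
    (hna : ∀ i : ℕ, a ≠ (α ^ (2 ^ s + 1)) ^ i) : qS F s a ^ 2 = (2 ^ (2 * s)) ^ 2 := by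
  obtain ⟨h1, h2, h3⟩ := exists_pow hc hα
  have hex : ∀ x : F, x ≠ 0 → ∃ k, α ^ k = x := by
    intro x hx
    have : x ∈ Finset.univ.erase (0 : F) := by simp [hx]
    rw [← h1, Finset.mem_image] at this
    obtain ⟨k, _, hk⟩ := this
    exact ⟨k, hk⟩
  rw [qS_sq s hc]
  have : Finset.univ.filter (fun x : F => a * x = (a * x ^ 2 ^ s) ^ 2 ^ s) = {0} := by
    ext x
    simp only [Finset.mem_filter, Finset.mem_univ, true_and, Finset.mem_singleton]
    constructor
    · intro hx
      by_contra hx0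
      set z := a * x ^ (2 ^ s + 1) with hz
      have hz0 : z ≠ 0 := mul_ne_zero ha (pow_ne_zero _ hx0)
      have hzq : z ^ 2 ^ s = z := by
        have : z = (a * x ^ 2 ^ s) * x := by rw [hz, pow_succ, mul_assoc]
        rw [this, mul_pow, ← hx]; ring
      have hz1 : z ^ (2 ^ s - 1) = 1 := by
        apply mul_right_cancel₀ hz0
        rw [← pow_succ, Nat.sub_add_cancel Nat.one_le_two_pow, hzq, one_mul]
      obtain ⟨k, hk⟩ := hex z hz0
      obtain ⟨l, hl⟩ := hex x⁻¹ (inv_ne_zero hx0)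
      rw [← hk, ← pow_mul] at hz1
      have hd := orderOf_dvd_of_pow_eq_one hz1
      rw [hα, ← n_mul, ← mul_assoc] at hd
      have hpos : 0 < 2 ^ s - 1 := by
        have : 1 < 2 ^ s := Nat.one_lt_two_pow (by omega)
        omega
      have hd2 := Nat.dvd_of_mul_dvd_mul_right hpos hd
      obtain ⟨j, hj⟩ := dvd_trans (dvd_mul_right _ _) hd2
      apply hna (j + l)
      have : a = z * x⁻¹ ^ (2 ^ s + 1) := by
        rw [hz, mul_assoc, ← mul_pow, mul_inv_cancel₀ hx0, one_pow, mul_one]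
      rw [this, ← hk, ← hl, hj, ← pow_mul, ← pow_mul, ← pow_add]
      congr 1; ring
    · rintro rfl
      simp
  rw [this]
  simp [sgn]
  rw [← pow_mul]; congr 1; ring

lemma two_pow_ge (hs : 2 ≤ s) : (4 : ℤ) ≤ 2 ^ s := by
  calc (4 : ℤ) = 2 ^ 2 := by norm_num
    _ ≤ 2 ^ s := pow_le_pow_right₀ (by norm_num) hs

lemma qS_one [DecidableEq F] (hc : Fintype.card F = 2 ^ (4 * s))
    (hα : orderOf α = 2 ^ (4 * s) - 1) (hs : 2 ≤ s) : qS F s 1 = - (2 ^ s) ^ 3 := by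
  have h := qS_one_sq hc hα hs
  have e := qS_eq hc hα hs 1
  rw [mul_comm 3 s, pow_mul] at h
  rcases sq_eq_sq_iff_eq_or_eq_neg.1 h with h | h
  · exfalso
    have hq := two_pow_ge hs
    rw [h] at e
    set q : ℤ := 2 ^ s
    have : q + 1 ∣ 2 := ⟨q ^ 2 - q + 1 - ∑ i ∈ Finset.range ((2 ^ (2 * s) + 1) * (2 ^ s - 1)),
        sgn (Algebra.trace (ZMod 2) F (1 * (α ^ (2 ^ s + 1)) ^ i)), by linear_combination -e⟩
    have := Int.le_of_dvd (by norm_num) this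
    linarith
  · exact h

lemma qS_other [DecidableEq F] (hc : Fintype.card F = 2 ^ (4 * s))
    (hα : orderOf α = 2 ^ (4 * s) - 1) (hs : 2 ≤ s) (a : F) (ha : a ≠ 0)
    (hna : ∀ i : ℕ, a ≠ (α ^ (2 ^ s + 1)) ^ i) : qS F s a = (2 ^ s) ^ 2 := by
  have h := qS_other_sq hc hα hs a ha hna
  have e := qS_eq hc hα hs a
  rw [mul_comm 2 s, pow_mul] at h
  rcases sq_eq_sq_iff_eq_or_eq_neg.1 h with h | h
  · exact h
  · exfalso
    have hq := two_pow_ge hs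
    rw [h] at e
    set q : ℤ := 2 ^ s
    have : q + 1 ∣ 2 := ⟨1 - q - ∑ i ∈ Finset.range ((2 ^ (2 * s) + 1) * (2 ^ s - 1)),
        sgn (Algebra.trace (ZMod 2) F (a * (α ^ (2 ^ s + 1)) ^ i)), by linear_combination -e⟩
    have := Int.le_of_dvd (by norm_num) this
    linarith

/-- the trace codeword map -/
noncomputable def cw (n : ℕ) (β : F) : F →ₗ[ZMod 2] (Fin n → ZMod 2) where
  toFun a := fun i => Algebra.trace (ZMod 2) F (a * β ^ (i : ℕ))
  map_add' a b := by funext i; simp [add_mul]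
  map_smul' r a := by funext i; simp

lemma sgn_eq (z : ZMod 2) : sgn z = 1 - 2 * (if z ≠ 0 then 1 else 0) := by
  revert z; decide

lemma sum_sgn_norm {n : ℕ} (c : Fin n → ZMod 2) :
    ∑ i, sgn (c i) = n - 2 * (hammingNorm c : ℤ) := by
  simp only [sgn_eq, Finset.sum_sub_distrib, ← Finset.mul_sum, hammingNorm]
  rw [Finset.sum_boole]
  simp

lemma qS_norm [DecidableEq F] (hc : Fintype.card F = 2 ^ (4 * s)) (hα : orderOf α = 2 ^ (4 * s) - 1)
    (hs : 2 ≤ s) (n : ℕ) (hn : n = (2 ^ (2 * s) + 1) * (2 ^ s - 1)) (a : F) :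
    qS F s a = 1 + (2 ^ s + 1) * (n - 2 * (hammingNorm (cw n (α ^ (2 ^ s + 1)) a) : ℤ)) := by
  rw [qS_eq hc hα hs, ← sum_sgn_norm, ← hn, Finset.sum_range]
  rfl

lemma dual_eq (n : ℕ) (β : F) : dualCode (BCHCode n β {1}) = LinearMap.range (cw n β) := by
  ext b
  constructor
  · intro hb
    let φ : (Fin n → ZMod 2) →ₗ[ZMod 2] F :=
      { toFun := fun c => ∑ i : Fin n, c i • β ^ (i : ℕ)
        map_add' := fun a b => by simp [add_smul, Finset.sum_add_distrib]
        map_smul' := fun r a => by simp [Finset.smul_sum, mul_smul] }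
    let ψ : Module.Dual (ZMod 2) (Fin n → ZMod 2) :=
      { toFun := fun c => ∑ i : Fin n, b i * c i
        map_add' := fun a b => by simp [mul_add, Finset.sum_add_distrib]
        map_smul' := fun r a => by simp [Finset.mul_sum, mul_left_comm] }
    have hψ : ψ ∈ (LinearMap.ker φ).dualAnnihilator := by
      rw [Submodule.mem_dualAnnihilator]
      intro c hcc
      apply hb c
      intro j hj
      rw [Finset.mem_singleton] at hj
      subst hj
      simp only [one_mul]
      exact hcc
    rw [← LinearMap.range_dualMap_eq_dualAnnihilator_ker] at hψ
    obtain ⟨g, hg⟩ := hψ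
    let a := ((Algebra.traceForm (ZMod 2) F).toDual (traceForm_nondegenerate (ZMod 2) F)).symm g
    refine ⟨a, ?_⟩
    have ha : ∀ y, Algebra.trace (ZMod 2) F (a * y) = g y := by
      intro y
      rw [← Algebra.traceForm_apply]
      exact LinearMap.BilinForm.apply_toDual_symm_apply _ _
    funext i
    have h1 : Algebra.trace (ZMod 2) F (a * β ^ (i : ℕ)) = g (β ^ (i : ℕ)) := ha _
    have h2 := LinearMap.congr_fun hg (Pi.single i 1)
    have h3 : φ (Pi.single i 1) = β ^ (i : ℕ) := by
      simp [φ, Pi.single_apply, ite_smul]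
    have h4 : ψ (Pi.single i 1) = b i := by
      simp [ψ, Pi.single_apply]
    rw [LinearMap.dualMap_apply, h3, h4] at h2
    exact h1.trans h2
  · rintro ⟨a, rfl⟩ c hcc
    have := hcc 1 (by simp)
    simp only [one_mul] at this
    have h : ∑ i, cw n β a i * c i =
        Algebra.trace (ZMod 2) F (a * ∑ i : Fin n, c i • β ^ (i : ℕ)) := by
      rw [Finset.mul_sum, map_sum]
      refine Finset.sum_congr rfl fun i _ => ?_
      rw [mul_smul_comm, map_smul, smul_eq_mul, mul_comm]
      rfl
    rw [h, this, mul_zero, map_zero]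

end Helpers

theorem stmt_2 (s : ℕ) (hs : 2 ≤ s) (n : ℕ) (hn : n = (2 ^ (2 * s) + 1) * (2 ^ s - 1))
    (α : GaloisField 2 (4 * s)) (hα : orderOf α = 2 ^ (4 * s) - 1)
    (β : GaloisField 2 (4 * s)) (hβ : β = α ^ (2 ^ s + 1))
    (D : Submodule (ZMod 2) (Fin n → ZMod 2)) (hD : D = dualCode (BCHCode n β {1})) :
    Module.finrank (ZMod 2) D = 4 * s ∧
    minDist D = 2 ^ (3 * s - 1) - 2 ^ (2 * s - 1) ∧
    weightCount D (2 ^ (3 * s - 1) - 2 ^ (2 * s - 1)) = 2 ^ (4 * s) - 1 - n ∧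
    weightCount D (2 ^ (3 * s - 1)) = n ∧
    weightCount D 0 = 1 ∧
    ∀ w : ℕ, w ≠ 0 → w ≠ 2 ^ (3 * s - 1) - 2 ^ (2 * s - 1) → w ≠ 2 ^ (3 * s - 1) →
      weightCount D w = 0 := by
  classical
  letI : Fintype (GaloisField 2 (4 * s)) := Fintype.ofFinite _
  have hc : Fintype.card (GaloisField 2 (4 * s)) = 2 ^ (4 * s) := by
    rw [← Nat.card_eq_fintype_card]; exact GaloisField.card 2 (4 * s) (by omega)
  rw [dual_eq] at hD
  have hα0 := (exists_pow hc hα).2.2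
  have hord : orderOf β = n := by rw [hβ, hn]; exact beta_order hα hs
  set P : Finset (GaloisField 2 (4 * s)) := (Finset.range n).image (fun i => β ^ i) with hP
  have hPc : P.card = n := by
    rw [hP, Finset.card_image_of_injOn, Finset.card_range]
    intro i hi j hj h
    simp only [Finset.coe_range, Set.mem_Iio] at hi hj
    rw [← hord] at hi hj
    exact pow_injOn_Iio_orderOf hi hj h
  have hβ0 : β ≠ 0 := by rw [hβ]; exact pow_ne_zero _ hα0
  have hP0 : (0 : GaloisField 2 (4 * s)) ∉ P := by
    simp [hP, hβ0]
  have hn' : (n : ℤ) = (2 ^ s) ^ 3 - (2 ^ s) ^ 2 + 2 ^ s - 1 := by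
    have : 1 ≤ 2 ^ s := Nat.one_le_two_pow
    rw [hn]
    push_cast [this]
    rw [mul_comm 2 s, pow_mul]; ring
  have hnpos : 0 < n := by
    have hq := two_pow_ge hs
    have : (0 : ℤ) < n := by rw [hn']; nlinarith
    exact_mod_cast this
  have hq := two_pow_ge hs
  have e2 : 2 * 2 ^ (2 * s - 1) = ((2 ^ s) ^ 2 : ℕ) := by
    rw [← pow_succ', ← pow_mul]; congr 1; omega
  have e3 : 2 * 2 ^ (3 * s - 1) = ((2 ^ s) ^ 3 : ℕ) := by
    rw [← pow_succ', ← pow_mul]; congr 1; omega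
  have hlt : 2 ^ (2 * s - 1) < 2 ^ (3 * s - 1) := Nat.pow_lt_pow_right (by norm_num) (by omega)
  have hpos2 : 0 < 2 ^ (2 * s - 1) := by positivity
  have e2' : (2 : ℤ) * ((2 ^ (2 * s - 1) : ℕ) : ℤ) = (2 ^ s) ^ 2 := by exact_mod_cast e2
  have e3' : (2 : ℤ) * ((2 ^ (3 * s - 1) : ℕ) : ℤ) = (2 ^ s) ^ 3 := by exact_mod_cast e3
  generalize hA : 2 ^ (2 * s - 1) = A at *
  generalize hB : 2 ^ (3 * s - 1) = B at *
  have hnorm := qS_norm hc hα hs n hn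
  rw [← hβ] at hnorm
  have w0 : hammingNorm (cw n β (0 : GaloisField 2 (4 * s))) = 0 := by simp
  have wP : ∀ a ∈ P, hammingNorm (cw n β a) = B := by
    intro a ha
    have h := hnorm a
    rw [hP, Finset.mem_image] at ha
    obtain ⟨i, _, rfl⟩ := ha
    rw [hβ, qS_one_shift hα0, qS_one hc hα hs, ← hβ, hn'] at h
    have h2 : ((2 : ℤ) ^ s + 1) * (2 * (hammingNorm (cw n β (β ^ i)) : ℤ)) =
        (2 ^ s + 1) * (2 * B) := by
      rw [e3']; linear_combination h
    have h3 := mul_left_cancel₀ (by linarith) h2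
    omega
  have wO : ∀ a, a ≠ 0 → a ∉ P → hammingNorm (cw n β a) = B - A := by
    intro a ha haP
    have h := hnorm a
    rw [qS_other hc hα hs a ha, hn'] at h
    · have h2 : ((2 : ℤ) ^ s + 1) * (2 * (hammingNorm (cw n β a) : ℤ)) =
          (2 ^ s + 1) * (2 * B - 2 * A) := by
        rw [e3', e2']; linear_combination h
      have h3 := mul_left_cancel₀ (by linarith) h2
      omega
    · intro i hi
      apply haP
      rw [hP, Finset.mem_image]
      refine ⟨i % n, Finset.mem_range.2 (Nat.mod_lt _ hnpos), ?_⟩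
      rw [hi, ← hβ, ← hord, pow_mod_orderOf]
  have wne : ∀ a, a ≠ 0 → hammingNorm (cw n β a) ≠ 0 := by
    intro a ha
    by_cases haP : a ∈ P
    · rw [wP a haP]; omega
    · rw [wO a ha haP]; omega
  have hinj : Function.Injective (cw n β) := by
    rw [injective_iff_map_eq_zero]
    intro a ha
    by_contra h
    exact wne a h (by rw [ha]; simp)
  have hcount : ∀ w, weightCount D w =
      (Finset.univ.filter (fun a => hammingNorm (cw n β a) = w)).card := by
    intro w
    rw [weightCount, ← Set.ncard_coe_finset, ← Set.ncard_image_of_injective _ hinj]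
    congr 1
    ext c
    rw [hD]
    simp only [Set.mem_setOf_eq, LinearMap.mem_range, Set.mem_image, Finset.coe_filter,
      Finset.mem_univ, true_and]
    constructor
    · rintro ⟨⟨a, rfl⟩, h⟩
      exact ⟨a, h, rfl⟩
    · rintro ⟨a, h, rfl⟩
      exact ⟨⟨a, rfl⟩, h⟩
  have f1 : Finset.univ.filter (fun a => hammingNorm (cw n β a) = B - A) =
      (insert 0 P)ᶜ := by
    ext a
    simp only [Finset.mem_filter, Finset.mem_univ, true_and, Finset.mem_compl, Finset.mem_insert,
      not_or]
    constructor
    · intro h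
      refine ⟨?_, ?_⟩
      · rintro rfl; rw [w0] at h; omega
      · intro haP; rw [wP a haP] at h; omega
    · rintro ⟨h1, h2⟩; exact wO a h1 h2
  have c1 : weightCount D (B - A) = 2 ^ (4 * s) - 1 - n := by
    rw [hcount, f1, Finset.card_compl, Finset.card_insert_of_notMem hP0, hPc, hc]
    omega
  have hbig : 0 < 2 ^ (4 * s) - 1 - n := by
    rw [← n_mul, ← hn]
    have : 4 ≤ 2 ^ s := by exact_mod_cast hq
    have : 2 * n ≤ (2 ^ s + 1) * n := Nat.mul_le_mul_right _ (by omega)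
    omega
  refine ⟨?_, ?_, c1, ?_, ?_, ?_⟩
  · rw [hD, LinearMap.finrank_range_of_inj hinj, finrank_F s hc]
  · have hex : ∃ a, a ∈ Finset.univ.filter (fun a => hammingNorm (cw n β a) = B - A) := by
      apply Finset.card_pos.1
      rw [← hcount, c1]; exact hbig
    obtain ⟨a, ha⟩ := hex
    simp only [Finset.mem_filter, Finset.mem_univ, true_and] at ha
    apply le_antisymm
    · apply Nat.sInf_le
      refine ⟨cw n β a, by rw [hD]; exact ⟨a, rfl⟩, ?_, ha⟩
      intro h0
      rw [h0, hammingNorm_zero] at ha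
      omega
    · apply le_csInf
      · refine ⟨B - A, cw n β a, by rw [hD]; exact ⟨a, rfl⟩, ?_, ha⟩
        intro h0
        rw [h0, hammingNorm_zero] at ha
        omega
      · rintro w ⟨c, hcD, hc0, rfl⟩
        rw [hD] at hcD
        obtain ⟨b, rfl⟩ := hcD
        have hb : b ≠ 0 := by rintro rfl; exact hc0 (map_zero _)
        by_cases hbP : b ∈ P
        · rw [wP b hbP]; omega
        · rw [wO b hb hbP]
  · rw [hcount]
    refine Eq.trans (congrArg Finset.card ?_) hPc
    ext a
    simp only [Finset.mem_filter, Finset.mem_univ, true_and]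
    constructor
    · intro h
      by_contra haP
      by_cases ha : a = 0
      · rw [ha, w0] at h; omega
      · rw [wO a ha haP] at h; omega
    · exact wP a
  · rw [hcount, Finset.card_eq_one]
    refine ⟨0, ?_⟩
    ext a
    simp only [Finset.mem_filter, Finset.mem_univ, true_and, Finset.mem_singleton]
    constructor
    · intro h
      by_contra ha
      exact wne a ha h
    · rintro rfl; exact w0
  · intro w h0 h1 h2
    rw [hcount, Finset.card_eq_zero, Finset.filter_eq_empty_iff]
    intro a _ h
    by_cases ha : a = 0
    · rw [ha, w0] at h; exact h0 h.symm
    · by_cases haP : a ∈ P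
      · exact h2 (by rw [← h, wP a haP])
      · exact h1 (by rw [← h, wO a ha haP])
end

section
/- Let s ≥ 2 and set u = 2^s. The number of codewords of Hamming weight exactly 3 in the code C_{(2,n,3,1)} equals (u−2)(u−1)(u²+1)/6, and in particular this number is positive. -/
open Finset

section Helpers

variable {F : Type} [Field F]

theorem key_fwd [CharP F 2] (s : ℕ) (x : F)
    (h1 : x ^ ((2 ^ (2 * s) + 1) * (2 ^ s - 1)) = 1)
    (h2 : (x + 1) ^ ((2 ^ (2 * s) + 1) * (2 ^ s - 1)) = 1) : x ^ (2 ^ s) = x := by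
  have aux : ∀ y : F, y ^ ((2 ^ (2 * s) + 1) * (2 ^ s - 1)) = 1 →
      y ^ (2 ^ (3 * s)) * y ^ (2 ^ s) = y ^ (2 ^ (2 * s)) * y := by
    intro y hy
    have e : 2 ^ (3 * s) + 2 ^ s = (2 ^ (2 * s) + 1) * (2 ^ s - 1) + (2 ^ (2 * s) + 1) := by
      obtain ⟨v, hv⟩ : ∃ v, 2 ^ s = v + 1 := ⟨2 ^ s - 1, by have := Nat.one_le_two_pow (n := s); omega⟩
      have e3 : 2 ^ (3 * s) = (2 ^ s) ^ 3 := by rw [← pow_mul, mul_comm]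
      have e2 : 2 ^ (2 * s) = (2 ^ s) ^ 2 := by rw [← pow_mul, mul_comm]
      rw [e3, e2, hv]
      simp only [Nat.add_sub_cancel]
      ring
    rw [← pow_add, e, pow_add, hy, one_mul, pow_succ]
  have a1 := aux x h1
  have a2 := aux (x + 1) h2
  simp only [add_pow_char_pow, one_pow] at a2
  have hmul : (x ^ 2 ^ s - x) * (x ^ 2 ^ s - x ^ 2 ^ (2 * s)) = 0 := by
    linear_combination (-(x ^ 2 ^ s) - 1) * a1 + x ^ 2 ^ s * a2
  rcases mul_eq_zero.1 hmul with h | h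
  · exact sub_eq_zero.1 h
  · have e : x ^ 2 ^ (2 * s) = (x ^ 2 ^ s) ^ 2 ^ s := by
      rw [← pow_mul, two_mul, pow_add]
    rw [e, ← sub_pow_char_pow] at h
    have := pow_eq_zero_iff (n := 2 ^ s) (by positivity) |>.1 h
    exact (sub_eq_zero.1 this).symm

theorem key_count [DecidableEq F] [CharP F 2] (s : ℕ) (hs : 2 ≤ s) (n : ℕ)
    (hn : n = (2 ^ (2 * s) + 1) * (2 ^ s - 1)) (ζ : F) (hζ : IsPrimitiveRoot ζ (2 ^ s - 1)) :
    #{a ∈ Polynomial.nthRootsFinset n (1 : F) | a + 1 ∈ Polynomial.nthRootsFinset n (1 : F)}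
      = 2 ^ s - 2 := by
  have h4 : 4 ≤ 2 ^ s := by simpa using Nat.pow_le_pow_right (n := 2) (by norm_num) hs
  have hn0 : 0 < n := by
    rw [hn]; exact Nat.mul_pos (by positivity) (by omega)
  have hm0 : 0 < 2 ^ s - 1 := by omega
  have : {a ∈ Polynomial.nthRootsFinset n (1 : F) | a + 1 ∈ Polynomial.nthRootsFinset n (1 : F)}
      = (Polynomial.nthRootsFinset (2 ^ s - 1) (1 : F)).erase 1 := by
    ext a
    simp only [Finset.mem_filter, Polynomial.mem_nthRootsFinset hn0,
      Polynomial.mem_nthRootsFinset hm0, Finset.mem_erase]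
    have hfac : ∀ y : F, y ^ 2 ^ s = y ^ (2 ^ s - 1) * y := fun y => by
      rw [← pow_succ]; congr 1; omega
    constructor
    · rintro ⟨h1, h2⟩
      have h := key_fwd s a (hn ▸ h1) (hn ▸ h2)
      have ha0 : a ≠ 0 := by rintro rfl; simp [hn0.ne'] at h1
      refine ⟨?_, ?_⟩
      · rintro rfl
        rw [CharTwo.add_self_eq_zero, zero_pow hn0.ne'] at h2
        simp at h2
      · rw [hfac] at h
        exact mul_right_cancel₀ ha0 (by rw [h, one_mul])
    · rintro ⟨h1, h2⟩
      have h : a ^ 2 ^ s = a := by rw [hfac, h2, one_mul]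
      have h' : (a + 1) ^ 2 ^ s = a + 1 := by rw [add_pow_char_pow, h, one_pow]
      have ha1 : a + 1 ≠ 0 := by
        intro h0; exact h1 (CharTwo.add_eq_zero.1 h0)
      rw [hfac] at h'
      have h'' : (a + 1) ^ (2 ^ s - 1) = 1 := mul_right_cancel₀ ha1 (by rw [h', one_mul])
      have hd : ∀ y : F, y ^ (2 ^ s - 1) = 1 → y ^ n = 1 := by
        intro y hy
        rw [hn, mul_comm, pow_mul, hy, one_pow]
      exact ⟨hd _ h2, hd _ h''⟩
  rw [this, Finset.card_erase_of_mem, hζ.card_nthRootsFinset]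
  · omega
  · simp [Polynomial.mem_nthRootsFinset hm0]

/-- ordered pairs -/
theorem pair_count [DecidableEq F] [CharP F 2] (n : ℕ) (hn0 : 0 < n) :
    #{p ∈ Polynomial.nthRootsFinset n (1 : F) ×ˢ Polynomial.nthRootsFinset n (1 : F) |
        p.1 + p.2 ∈ Polynomial.nthRootsFinset n (1 : F)} =
    #(Polynomial.nthRootsFinset n (1 : F)) *
    #{a ∈ Polynomial.nthRootsFinset n (1 : F) | a + 1 ∈ Polynomial.nthRootsFinset n (1 : F)} := by
  rw [← Finset.card_product]
  symm
  have hne : ∀ x : F, x ^ n = 1 → x ≠ 0 := by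
    rintro x h rfl; simp [hn0.ne'] at h
  refine Finset.card_bij (fun p _ => (p.1, p.1 * p.2)) ?_ ?_ ?_
  · rintro ⟨x, a⟩ h
    simp only [Finset.mem_product, Finset.mem_filter, Polynomial.mem_nthRootsFinset hn0] at h ⊢
    obtain ⟨h1, h2, h3⟩ := h
    have e : x + x * a = x * (a + 1) := by ring
    rw [e, mul_pow, mul_pow, h1, h2, h3]
    simp
  · rintro ⟨x, a⟩ h ⟨y, b⟩ h' heq
    simp only [Finset.mem_product, Finset.mem_filter, Polynomial.mem_nthRootsFinset hn0] at h
    simp only [Prod.mk.injEq] at heq ⊢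
    obtain ⟨rfl, h2⟩ := heq
    exact ⟨rfl, mul_left_cancel₀ (hne x h.1) h2⟩
  · rintro ⟨x, y⟩ h
    simp only [Finset.mem_product, Finset.mem_filter, Polynomial.mem_nthRootsFinset hn0] at h
    obtain ⟨⟨h1, h2⟩, h3⟩ := h
    have hx := hne x h1
    refine ⟨(x, x⁻¹ * y), ?_, ?_⟩
    · simp only [Finset.mem_product, Finset.mem_filter, Polynomial.mem_nthRootsFinset hn0]
      have e : x⁻¹ * y + 1 = x⁻¹ * (x + y) := by field_simp; ring
      rw [e, mul_pow, mul_pow, inv_pow, h1, h2, h3]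
      simp
    · simp [hx]

theorem triple_count [DecidableEq F] [CharP F 2] (U : Finset F) (h0 : (0 : F) ∉ U) :
    #{p ∈ U ×ˢ U | p.1 + p.2 ∈ U} = 6 * #{T ∈ U.powersetCard 3 | ∑ x ∈ T, x = 0} := by
  have hne : ∀ x ∈ U, x ≠ 0 := fun x hx h => h0 (h ▸ hx)
  have hcard : ∀ x y : F, x ∈ U → y ∈ U → x + y ∈ U → x ≠ y ∧ x ≠ x + y ∧ y ≠ x + y := by
    intro x y hx hy hxy
    refine ⟨?_, ?_, ?_⟩
    · rintro rfl
      exact hne _ hxy (CharTwo.add_self_eq_zero x)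
    · intro h; exact hne y hy (by simpa using h)
    · intro h; exact hne x hx (by simpa using h)
  rw [Finset.card_eq_sum_card_fiberwise (f := fun p : F × F => ({p.1, p.2, p.1 + p.2} : Finset F))
    (t := {T ∈ U.powersetCard 3 | ∑ x ∈ T, x = 0})]
  · rw [Finset.sum_const_nat (m := 6), mul_comm]
    intro T hT
    simp only [Finset.mem_filter, Finset.mem_powersetCard] at hT
    obtain ⟨⟨hTU, hT3⟩, hsum⟩ := hT
    have : {p ∈ {p ∈ U ×ˢ U | p.1 + p.2 ∈ U} | ({p.1, p.2, p.1 + p.2} : Finset F) = T}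
        = T.offDiag := by
      ext ⟨x, y⟩
      simp only [Finset.mem_filter, Finset.mem_product, Finset.mem_offDiag]
      constructor
      · rintro ⟨⟨⟨hx, hy⟩, hxy⟩, rfl⟩
        refine ⟨by simp, by simp, (hcard x y hx hy hxy).1⟩
      · rintro ⟨hx, hy, hxy⟩
        have hc : #((T.erase x).erase y) = 1 := by
          rw [Finset.card_erase_of_mem (Finset.mem_erase.2 ⟨hxy.symm, hy⟩),
            Finset.card_erase_of_mem hx, hT3]
        obtain ⟨z, hz⟩ := Finset.card_eq_one.1 hc
        have hyT : y ∈ T.erase x := Finset.mem_erase.2 ⟨hxy.symm, hy⟩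
        have hTe : T = {x, y, z} := by
          rw [← hz, Finset.insert_erase hyT, Finset.insert_erase hx]
        have hs : x + (y + z) = 0 := by
          rw [← hsum, ← Finset.add_sum_erase T _ hx, ← Finset.add_sum_erase _ _ hyT, hz]
          simp
        have hz' : z = x + y := by
          rw [← add_assoc] at hs
          exact (CharTwo.add_eq_zero.1 hs).symm
        subst hz'
        exact ⟨⟨⟨hTU hx, hTU hy⟩, hTU (by rw [hTe]; simp)⟩, hTe.symm⟩
    rw [this, Finset.offDiag_card, hT3]
  · rintro ⟨x, y⟩ h
    simp only [Finset.coe_filter, Finset.mem_product, Set.mem_setOf_eq] at h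
    obtain ⟨⟨hx, hy⟩, hxy⟩ := h
    obtain ⟨e1, e2, e3⟩ := hcard x y hx hy hxy
    simp only [Finset.coe_filter, Finset.mem_powersetCard, Set.mem_setOf_eq]
    refine ⟨⟨?_, ?_⟩, ?_⟩
    · intro z hz
      simp only [Finset.mem_insert, Finset.mem_singleton] at hz
      rcases hz with rfl | rfl | rfl <;> assumption
    · exact Finset.card_eq_three.2 ⟨_, _, _, e1, e2, e3, rfl⟩
    · rw [Finset.sum_insert (by simp only [Finset.mem_insert, Finset.mem_singleton]; tauto),
        Finset.sum_insert (by simpa using e3), Finset.sum_singleton, ← add_assoc]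
      exact CharTwo.add_self_eq_zero _

theorem weight_eq [DecidableEq F] [Algebra (ZMod 2) F] (n : ℕ) (hn0 : 0 < n) (β : F)
    (hβ : IsPrimitiveRoot β n) (w : ℕ) :
    weightCount (BCHCode n β {1}) w =
      #{T ∈ (Polynomial.nthRootsFinset n (1 : F)).powersetCard w | ∑ x ∈ T, x = 0} := by
  have hinj : Function.Injective (fun i : Fin n => β ^ (i : ℕ)) := by
    intro i j h
    exact Fin.ext (hβ.pow_inj i.2 j.2 h)
  have hz2 : ∀ a : ZMod 2, a ≠ 0 → a = 1 := by decide
  unfold weightCount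
  rw [← Set.ncard_coe_finset]
  refine Set.ncard_congr
    (fun c _ => (Finset.univ.filter (fun i => c i ≠ 0)).image (fun i : Fin n => β ^ (i : ℕ))) ?_ ?_ ?_
  · rintro c ⟨hc, hw⟩
    simp only [Finset.coe_filter, Finset.mem_powersetCard, Set.mem_setOf_eq]
    refine ⟨⟨?_, ?_⟩, ?_⟩
    · intro x hx
      obtain ⟨i, -, rfl⟩ := Finset.mem_image.1 hx
      rw [Polynomial.mem_nthRootsFinset hn0, ← pow_mul, mul_comm, pow_mul, hβ.pow_eq_one, one_pow]
    · rw [Finset.card_image_of_injective _ hinj]; exact hw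
    · rw [Finset.sum_image (fun _ _ _ _ h => hinj h), Finset.sum_filter]
      have := hc 1 (by simp)
      refine Eq.trans ?_ this
      refine Finset.sum_congr rfl fun i _ => ?_
      by_cases h : c i = 0
      · simp [h]
      · simp [hz2 _ h]
  · intro c d _ _ h
    have h := Finset.image_injective hinj h
    funext i
    have hi := congrArg (fun S => i ∈ S) h
    simp only [Finset.mem_filter, Finset.mem_univ, true_and, eq_iff_iff] at hi
    by_cases h1 : c i = 0
    · have : d i = 0 := by tauto
      rw [h1, this]
    · rw [hz2 _ h1, hz2 _ (hi.1 h1)]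
  · intro T hT
    simp only [Finset.coe_filter, Finset.mem_powersetCard, Set.mem_setOf_eq] at hT
    obtain ⟨⟨hTU, hTw⟩, hsum⟩ := hT
    have him : (Finset.univ.filter (fun i : Fin n => (if β ^ (i : ℕ) ∈ T then (1 : ZMod 2) else 0) ≠ 0)).image
        (fun i : Fin n => β ^ (i : ℕ)) = T := by
      ext x
      simp only [Finset.mem_image, Finset.mem_filter, Finset.mem_univ, true_and]
      constructor
      · rintro ⟨i, hi, rfl⟩
        by_contra hc
        simp [hc] at hi
      · intro hx
        have hx1 := (Polynomial.mem_nthRootsFinset hn0 _).1 (hTU hx)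
        have : NeZero n := ⟨hn0.ne'⟩
        obtain ⟨i, hi, rfl⟩ := hβ.eq_pow_of_pow_eq_one hx1
        exact ⟨⟨i, hi⟩, by simp [hx], rfl⟩
    refine ⟨fun i => if β ^ (i : ℕ) ∈ T then 1 else 0, ⟨?_, ?_⟩, him⟩
    · intro j hj
      rw [Finset.mem_singleton] at hj
      subst hj
      rw [← hsum]
      conv_rhs => rw [← him]
      rw [Finset.sum_image (fun _ _ _ _ h => hinj h), Finset.sum_filter]
      refine Finset.sum_congr rfl fun i _ => ?_
      by_cases h : β ^ (i : ℕ) ∈ T <;> simp [h]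
    · rw [← hTw]
      conv_rhs => rw [← him]
      rw [Finset.card_image_of_injective _ hinj]
      rfl

theorem main_gen [DecidableEq F] [Algebra (ZMod 2) F] [CharP F 2] (s : ℕ) (hs : 2 ≤ s) (n : ℕ)
    (hn : n = (2 ^ (2 * s) + 1) * (2 ^ s - 1)) (hn0 : 0 < n) (β : F) (hβp : IsPrimitiveRoot β n)
    (hζ : IsPrimitiveRoot (β ^ (2 ^ (2 * s) + 1)) (2 ^ s - 1)) :
    6 * weightCount (BCHCode n β {1}) 3 = n * (2 ^ s - 2) := by
  rw [weight_eq n hn0 β hβp, ← triple_count, pair_count n hn0, hβp.card_nthRootsFinset,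
      key_count s hs n hn _ hζ]
  rw [Polynomial.mem_nthRootsFinset hn0, zero_pow hn0.ne']
  exact zero_ne_one

end Helpers

theorem stmt_3 (s : ℕ) (hs : 2 ≤ s) (n : ℕ) (hn : n = (2 ^ (2 * s) + 1) * (2 ^ s - 1))
    (α : GaloisField 2 (4 * s)) (hα : orderOf α = 2 ^ (4 * s) - 1)
    (β : GaloisField 2 (4 * s)) (hβ : β = α ^ (2 ^ s + 1)) :
    6 * weightCount (BCHCode n β {1}) 3 = (2 ^ s - 2) * (2 ^ s - 1) * ((2 ^ s) ^ 2 + 1) ∧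
    0 < weightCount (BCHCode n β {1}) 3 := by
  classical
  have h4 : 4 ≤ 2 ^ s := by simpa using Nat.pow_le_pow_right (n := 2) (by norm_num) hs
  have hn0 : 0 < n := by
    rw [hn]; exact Nat.mul_pos (by positivity) (by omega)
  have e2 : 2 ^ (2 * s) = (2 ^ s) ^ 2 := by rw [← pow_mul, mul_comm]
  have hN : 2 ^ (4 * s) - 1 = (2 ^ s + 1) * n := by
    obtain ⟨v, hv⟩ : ∃ v, 2 ^ s = v + 1 := ⟨2 ^ s - 1, by omega⟩
    have e4 : 2 ^ (4 * s) = (2 ^ s) ^ 4 := by rw [← pow_mul, mul_comm]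
    rw [hn, e4, e2, hv]
    simp only [Nat.add_sub_cancel]
    apply Nat.sub_eq_of_eq_add
    ring
  have hαp : IsPrimitiveRoot α ((2 ^ s + 1) * n) := by
    rw [← hN, ← hα]; exact IsPrimitiveRoot.orderOf α
  have hNpos : 0 < (2 ^ s + 1) * n := by positivity
  have hβp : IsPrimitiveRoot β n := hβ ▸ hαp.pow hNpos rfl
  have hζ : IsPrimitiveRoot (β ^ (2 ^ (2 * s) + 1)) (2 ^ s - 1) := hβp.pow hn0 hn
  have hmain : 6 * weightCount (BCHCode n β {1}) 3
      = (2 ^ s - 2) * (2 ^ s - 1) * ((2 ^ s) ^ 2 + 1) := by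
    have hc : CharP (GaloisField 2 (4 * s)) 2 := inferInstance
    rw [main_gen s hs n hn hn0 β hβp hζ, hn, e2]
    ring
  refine ⟨hmain, ?_⟩
  have : 0 < (2 ^ s - 2) * (2 ^ s - 1) * ((2 ^ s) ^ 2 + 1) := by
    apply Nat.mul_pos
    · apply Nat.mul_pos <;> omega
    · positivity
  omega
end

section
/- Let s ≥ 2. The extended code of C_{(2,n,3,1)} has length n+1, dimension n − 4s, and minimum distance exactly 4, and it is distance-optimal with respect to the sphere packing bound: every binary linear code of length n+1 and dimension n − 4s has minimum distance at most 4. -/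
open Finset

lemma aux_arith (s : ℕ) (hs : 2 ≤ s) (n : ℕ) (hn : n = (2 ^ (2 * s) + 1) * (2 ^ s - 1)) :
    n * (2 ^ s + 1) = 2 ^ (4 * s) - 1 ∧ 2 ^ (2 * s) ≤ n ∧ 2 ^ (4 * s + 1) < (n + 1).choose 2 := by
  have h4 : 4 ≤ 2 ^ s := by
    calc 4 = 2 ^ 2 := rfl
      _ ≤ 2 ^ s := Nat.pow_le_pow_right (by norm_num) hs
  have e2 : 2 ^ (2 * s) = (2 ^ s) ^ 2 := by rw [← pow_mul, mul_comm]
  have e4 : 2 ^ (4 * s) = (2 ^ s) ^ 4 := by rw [← pow_mul, mul_comm]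
  rw [pow_succ, e4]
  rw [e2] at hn ⊢
  generalize 2 ^ s = q at *
  obtain ⟨r, rfl⟩ : ∃ r, q = r + 1 := ⟨q - 1, by omega⟩
  simp only [Nat.add_sub_cancel] at hn
  have hr : 3 ≤ r := by omega
  have h3 : 3 * (r + 1) ^ 2 ≤ n := by subst hn; nlinarith [sq_nonneg (r + 1)]
  refine ⟨?_, by nlinarith [sq_nonneg (r + 1)], ?_⟩
  · subst hn
    have : ((r + 1) ^ 2 + 1) * r * (r + 1 + 1) + 1 = (r + 1) ^ 4 := by ring
    omega
  · rw [Nat.choose_two_right, Nat.lt_iff_add_one_le, Nat.le_div_iff_mul_le (by norm_num)]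
    simp only [Nat.add_sub_cancel]
    have : (3 * (r + 1) ^ 2) * (3 * (r + 1) ^ 2) ≤ n * n := Nat.mul_le_mul h3 h3
    have h5 : (1:ℕ) ≤ (r+1)^4 := Nat.one_le_pow _ _ (by omega)
    nlinarith

/-- Sphere packing (pigeonhole) argument. -/
lemma exists_small {N k : ℕ} (D : Submodule (ZMod 2) (Fin N → ZMod 2))
    (hk : Module.finrank (ZMod 2) D + k = N) (hc : 2 ^ k < N.choose 2) :
    ∃ c ∈ D, c ≠ 0 ∧ hammingNorm c ≤ 4 := by
  classical
  have : Finite ((Fin N → ZMod 2) ⧸ D) := Quotient.finite _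
  let _ := Fintype.ofFinite ((Fin N → ZMod 2) ⧸ D)
  have hq : Module.finrank (ZMod 2) ((Fin N → ZMod 2) ⧸ D) = k := by
    have := Submodule.finrank_quotient_add_finrank D
    rw [Module.finrank_fin_fun] at this
    omega
  have hcard : Fintype.card ((Fin N → ZMod 2) ⧸ D) = 2 ^ k := by
    rw [Module.card_eq_pow_finrank (K := ZMod 2), hq, ZMod.card]
  let f : Finset (Fin N) → (Fin N → ZMod 2) := fun A i => if i ∈ A then 1 else 0
  obtain ⟨A, hA, B, hB, hne, hf⟩ := Finset.exists_ne_map_eq_of_card_lt_of_maps_to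
    (s := (univ : Finset (Fin N)).powersetCard 2)
    (t := (univ : Finset ((Fin N → ZMod 2) ⧸ D)))
    (f := fun A => D.mkQ (f A)) (by
      rw [Finset.card_powersetCard, Finset.card_univ, hcard, Finset.card_univ, Fintype.card_fin]
      exact hc) (by intro x _; simp)
  rw [Finset.mem_powersetCard] at hA hB
  refine ⟨f A - f B, ?_, ?_, ?_⟩
  · simpa [Submodule.Quotient.eq] using hf
  · intro h
    apply hne
    ext i
    have := congrFun h i
    simp only [f, Pi.sub_apply, Pi.zero_apply] at this
    by_cases h1 : i ∈ A <;> by_cases h2 : i ∈ B <;> simp_all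
  · have hsub : (univ.filter fun i => (f A - f B) i ≠ 0) ⊆ A ∪ B := by
      intro i hi
      simp only [Finset.mem_filter, f, Pi.sub_apply] at hi
      by_contra h
      simp only [Finset.mem_union, not_or] at h
      simp [h.1, h.2] at hi
    calc hammingNorm (f A - f B) ≤ (A ∪ B).card := Finset.card_le_card hsub
      _ ≤ A.card + B.card := Finset.card_union_le _ _
      _ = 4 := by omega

lemma minDist_le_four {N k : ℕ} (D : Submodule (ZMod 2) (Fin N → ZMod 2))
    (hk : Module.finrank (ZMod 2) D + k = N) (hc : 2 ^ k < N.choose 2) :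
    minDist D ≤ 4 := by
  obtain ⟨c, hc, h0, h4⟩ := exists_small D hk hc
  have h : minDist D ≤ hammingNorm c := Nat.sInf_le ⟨c, hc, h0, rfl⟩
  exact h.trans h4

/-- The syndrome map. -/
def synd {F : Type} [Field F] [Algebra (ZMod 2) F] (n : ℕ) (β : F) :
    (Fin n → ZMod 2) →ₗ[ZMod 2] F :=
  Fintype.linearCombination (ZMod 2) (fun i : Fin n => β ^ (i : ℕ))

lemma ker_synd {F : Type} [Field F] [Algebra (ZMod 2) F] (n : ℕ) (β : F) :
    LinearMap.ker (synd n β) = BCHCode n β {1} := by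
  ext c
  rw [LinearMap.mem_ker, synd, Fintype.linearCombination_apply]
  change _ ↔ ∀ j ∈ ({1} : Finset ℕ), ∑ i : Fin n, c i • β ^ (j * (i : ℕ)) = 0
  simp

lemma range_synd {F : Type} [Field F] [Algebra (ZMod 2) F] [Finite F] (s n : ℕ) (β : F)
    (hF : Module.finrank (ZMod 2) F = 4 * s) (hβ : orderOf β = n) (hs : 0 < s)
    (hn : 2 ^ (2 * s) ≤ n) : LinearMap.range (synd n β) = ⊤ := by
  have hn0 : 0 < n := lt_of_lt_of_le (by positivity) hn
  let K := IntermediateField.adjoin (ZMod 2) {β}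
  have hK : K = ⊤ := by
    have hmul := Module.finrank_mul_finrank (ZMod 2) K F
    rw [hF] at hmul
    by_contra hne
    have h1 : Module.finrank K F ≠ 1 := fun h => hne (IntermediateField.finrank_eq_one_iff_eq_top.mp h)
    have h0 : Module.finrank K F ≠ 0 := by intro h; rw [h] at hmul; omega
    have h2 : Module.finrank (ZMod 2) K ≤ 2 * s := by
      have : 2 ≤ Module.finrank K F := by omega
      nlinarith
    let _ := Fintype.ofFinite K
    have hcard : Fintype.card K = 2 ^ Module.finrank (ZMod 2) K := by
      rw [Module.card_eq_pow_finrank (K := ZMod 2), ZMod.card]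
    have hle : Fintype.card K ≤ 2 ^ (2 * s) := by
      rw [hcard]; exact Nat.pow_le_pow_right (by norm_num) h2
    have hb0 : β ≠ 0 := by
      rintro rfl
      rw [orderOf_zero] at hβ
      omega
    let b : K := ⟨β, IntermediateField.mem_adjoin_simple_self _ _⟩
    have hb : b ^ (Fintype.card K - 1) = 1 := by
      apply FiniteField.pow_card_sub_one_eq_one
      intro h
      exact hb0 (congrArg Subtype.val h)
    have hb' : β ^ (Fintype.card K - 1) = 1 := by simpa [b] using congrArg Subtype.val hb
    have hd := orderOf_dvd_of_pow_eq_one hb'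
    have hgt : 1 < Fintype.card K := Fintype.one_lt_card
    have := Nat.le_of_dvd (by omega) hd
    omega
  have halg : Algebra.adjoin (ZMod 2) {β} = ⊤ := by
    rw [← IntermediateField.adjoin_simple_toSubalgebra_of_isAlgebraic
      (Algebra.IsAlgebraic.isAlgebraic β)]
    change K.toSubalgebra = ⊤
    rw [hK]; rfl
  have hspan : Submodule.span (ZMod 2) (Submonoid.closure {β} : Set F) = ⊤ := by
    rw [← Algebra.adjoin_eq_span, halg]; rfl
  rw [synd, Fintype.range_linearCombination, eq_top_iff, ← hspan]
  apply Submodule.span_mono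
  intro x hx
  obtain ⟨k, rfl⟩ := Submonoid.mem_closure_singleton.mp hx
  refine ⟨⟨k % n, Nat.mod_lt _ hn0⟩, ?_⟩
  simp only [← hβ, pow_mod_orderOf]

lemma extendMap_inj (N : ℕ) : Function.Injective (extendMap N) := by
  intro a b h
  funext i
  have := congrFun h i.castSucc
  simpa [extendMap] using this

lemma zmod2_cases (x : ZMod 2) : x = 0 ∨ x = 1 := by
  revert x; decide

lemma four_le {F : Type} [Field F] [Algebra (ZMod 2) F] (n : ℕ) (β : F) (hn : 0 < n)
    (hβ : orderOf β = n) (c : Fin (n + 1) → ZMod 2)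
    (hc : c ∈ extendedCode (BCHCode n β {1})) (h0 : c ≠ 0) : 4 ≤ hammingNorm c := by
  classical
  obtain ⟨a, ha, rfl⟩ := hc
  have ha' : ∑ i : Fin n, a i • β ^ (i : ℕ) = 0 := by
    have := ha 1 (by simp)
    simpa using this
  have hb0 : β ≠ 0 := by
    rintro rfl
    rw [orderOf_zero] at hβ
    omega
  let x : Fin (n + 1) → F := fun j => if (j : ℕ) < n then β ^ (j : ℕ) else 0
  have hxinj : Function.Injective x := by
    intro i j hij
    simp only [x] at hij
    have hi := i.2
    have hj := j.2
    split_ifs at hij with h1 h2 h2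
    · apply Fin.ext
      exact pow_injOn_Iio_orderOf (by simpa [hβ] using h1) (by simpa [hβ] using h2) hij
    · exact absurd hij (pow_ne_zero _ hb0)
    · exact absurd hij.symm (pow_ne_zero _ hb0)
    · apply Fin.ext; omega
  set e := extendMap n a with he
  have hlast : e (Fin.last n) = ∑ i, a i := by simp [he, extendMap]
  have hcast : ∀ i : Fin n, e i.castSucc = a i := by intro i; simp [he, extendMap]
  have s1 : ∑ j, e j = 0 := by
    rw [Fin.sum_univ_castSucc, hlast]
    simp only [hcast]
    exact CharTwo.add_self_eq_zero _
  have s2 : ∑ j, e j • x j = 0 := by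
    rw [Fin.sum_univ_castSucc]
    simp [hcast, x, ha']
  let S : Finset (Fin (n + 1)) := univ.filter fun j => e j ≠ 0
  have hS : hammingNorm e = S.card := rfl
  have one : ∀ j ∈ S, e j = 1 := by
    intro j hj
    rcases zmod2_cases (e j) with h | h
    · simp [S, h] at hj
    · exact h
  have t1 : (S.card : ZMod 2) = 0 := by
    rw [← s1, ← Finset.sum_filter_ne_zero (s := univ), Finset.sum_congr rfl one]
    simp [S]
  have t2 : ∑ j ∈ S, x j = 0 := by
    rw [← s2, ← Finset.sum_subset (Finset.subset_univ S)]
    · exact Finset.sum_congr rfl fun j hj => by rw [one j hj, one_smul]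
    · intro j _ hj
      have : e j = 0 := by simpa [S] using hj
      rw [this, zero_smul]
  have hev : 2 ∣ S.card := (ZMod.natCast_eq_zero_iff _ _).mp t1
  have hpos : S.card ≠ 0 := by
    rw [← hS]; exact hammingNorm_ne_zero_iff.mpr h0
  have hne2 : S.card ≠ 2 := by
    intro h
    obtain ⟨i, j, hij, hSij⟩ := Finset.card_eq_two.mp h
    rw [hSij, Finset.sum_pair hij] at t2
    haveI : CharP F 2 := charP_of_injective_algebraMap (algebraMap (ZMod 2) F).injective 2
    exact hij (hxinj (CharTwo.add_eq_zero.mp t2))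
  rw [hS]
  omega

theorem stmt_4 (s : ℕ) (hs : 2 ≤ s) (n : ℕ) (hn : n = (2 ^ (2 * s) + 1) * (2 ^ s - 1))
    (α : GaloisField 2 (4 * s)) (hα : orderOf α = 2 ^ (4 * s) - 1)
    (β : GaloisField 2 (4 * s)) (hβ : β = α ^ (2 ^ s + 1)) :
    Module.finrank (ZMod 2) (extendedCode (BCHCode n β {1})) = n - 4 * s ∧
    minDist (extendedCode (BCHCode n β {1})) = 4 ∧
    ∀ D : Submodule (ZMod 2) (Fin (n + 1) → ZMod 2),
      Module.finrank (ZMod 2) D = n - 4 * s → minDist D ≤ 4 := by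
  obtain ⟨h1, h2, h3⟩ := aux_arith s hs n hn
  have hn0 : 0 < n := lt_of_lt_of_le (by positivity) h2
  have hord : orderOf β = n := by
    rw [hβ, orderOf_pow_of_dvd (by positivity) (by rw [hα, ← h1]; exact dvd_mul_left _ _), hα, ← h1]
    exact Nat.mul_div_cancel _ (by positivity)
  have hF : Module.finrank (ZMod 2) (GaloisField 2 (4 * s)) = 4 * s :=
    GaloisField.finrank 2 (by omega)
  have hrk : Module.finrank (ZMod 2) (BCHCode n β {1}) + 4 * s = n := by
    have h := LinearMap.finrank_range_add_finrank_ker (synd n β)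
    rw [range_synd s n β hF hord (by omega) h2, ker_synd, finrank_top, hF,
      Module.finrank_fin_fun] at h
    omega
  have hext : Module.finrank (ZMod 2) (extendedCode (BCHCode n β {1})) = n - 4 * s := by
    have := LinearEquiv.finrank_eq
      (Submodule.equivMapOfInjective (extendMap n) (extendMap_inj n) (BCHCode n β {1}))
    unfold extendedCode
    omega
  have hD : ∀ D : Submodule (ZMod 2) (Fin (n + 1) → ZMod 2),
      Module.finrank (ZMod 2) D = n - 4 * s → minDist D ≤ 4 := fun D h =>
    minDist_le_four (k := 4 * s + 1) D (by omega) h3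
  refine ⟨hext, le_antisymm (hD _ hext) ?_, hD⟩
  obtain ⟨c, hc, hc0, _⟩ := exists_small (k := 4 * s + 1)
    (extendedCode (BCHCode n β {1})) (by omega) h3
  have hmem := Nat.sInf_mem (s := {w | ∃ c ∈ extendedCode (BCHCode n β {1}),
    c ≠ 0 ∧ hammingNorm c = w}) ⟨_, c, hc, hc0, rfl⟩
  obtain ⟨d, hd, hd0, hw⟩ := hmem
  unfold minDist
  rw [← hw]
  exact four_le n β hn0 hord d hd hd0
end

section
/- Let s ≥ 2. The dual of the extended code of C_{(2,n,3,1)} has dimension 4s + 1 and minimum distance n + 1 − 2^{3s−1}; its weight distribution is: exactly 1 codeword of weight 0, exactly n codewords of weight n + 1 − 2^{3s−1}, exactly 2^{4s} − 1 − n codewords of weight 2^{3s−1} − 2^{2s−1}, exactly 2^{4s} − 1 − n codewords of weight n + 1 − 2^{3s−1} + 2^{2s−1}, exactly n codewords of weight 2^{3s−1}, exactly 1 codeword of weight n + 1, and no codewords of any other weight. -/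
open Finset

set_option linter.unusedSectionVars false

namespace BCHProof

/-- The sign character of ZMod 2. -/
def sg (b : ZMod 2) : ℤ := if b = 0 then 1 else -1

lemma sg_add : ∀ a b : ZMod 2, sg (a + b) = sg a * sg b := by decide

lemma sg_zero : sg 0 = 1 := by decide

lemma sg_one : sg 1 = -1 := by decide

lemma sg_ne : ∀ a : ZMod 2, a ≠ 0 → sg a = -1 := by decide

lemma sg_ind : ∀ a : ZMod 2, 2 * (if a ≠ 0 then (1 : ℤ) else 0) = 1 - sg a := by decide

section

variable {F : Type} [Field F] [Algebra (ZMod 2) F]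

/-- The absolute trace. -/
noncomputable def tr (x : F) : ZMod 2 := Algebra.trace (ZMod 2) F x

lemma tr_add (x y : F) : tr (x + y) = tr x + tr y := map_add _ _ _

lemma tr_zero : tr (0 : F) = 0 := map_zero _

variable [Fintype F]

lemma tr_frob (x : F) (k : ℕ) : tr (x ^ 2 ^ k) = tr x := by
  induction k generalizing x with
  | zero => simp
  | succ k ih =>
    rw [pow_succ, pow_mul]
    have h2 : ∀ y : F, tr (y ^ 2) = tr y := by
      intro y
      have := Algebra.trace_eq_of_algEquiv
        (FiniteField.frobeniusAlgEquivOfAlgebraic (ZMod 2) F) y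
      simpa [FiniteField.frobeniusAlgEquivOfAlgebraic, tr] using this
    rw [h2, ih]

lemma exists_tr_ne {c : F} (hc : c ≠ 0) : ∃ x : F, tr (c * x) ≠ 0 := by
  by_contra! h
  have hnd := traceForm_nondegenerate (ZMod 2) F
  exact hc (hnd.1 c (fun x => by simpa [tr, Algebra.traceForm_apply] using h x))

lemma exists_rep (g : F →ₗ[ZMod 2] ZMod 2) : ∃ a : F, ∀ x, g x = tr (a * x) := by
  have hnd := traceForm_nondegenerate (ZMod 2) F
  refine ⟨(LinearMap.BilinForm.toDual _ hnd).symm g, fun x => ?_⟩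
  have := LinearMap.BilinForm.apply_toDual_symm_apply (hB := hnd) g x
  rw [← this, Algebra.traceForm_apply, tr]

lemma sum_char {c : F} (hc : c ≠ 0) : ∑ x : F, sg (tr (c * x)) = 0 := by
  obtain ⟨y, hy⟩ := exists_tr_ne hc
  have h1 : ∑ x : F, sg (tr (c * (x + y))) = ∑ x : F, sg (tr (c * x)) :=
    Equiv.sum_comp (Equiv.addRight y) (fun x => sg (tr (c * x)))
  have h2 : ∑ x : F, sg (tr (c * (x + y))) = - ∑ x : F, sg (tr (c * x)) := by
    rw [← Finset.sum_neg_distrib]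
    refine Finset.sum_congr rfl fun x _ => ?_
    rw [mul_add, tr_add, sg_add, sg_ne _ hy]; ring
  omega

/-- Quadratic exponential sum. -/
lemma quad_sq (s : ℕ) (hcard : Fintype.card F = 2 ^ (4 * s)) (a : F)
    (ha : a ≠ 0) (han : a ^ ((2 ^ (2 * s) + 1) * (2 ^ s - 1)) ≠ 1) :
    (∑ x : F, sg (tr (a * x ^ (2 ^ s + 1)))) ^ 2 = 2 ^ (4 * s) := by
  classical
  have : CharP F 2 := charP_of_injective_algebraMap (algebraMap (ZMod 2) F).injective 2
  have hF : ∀ x : F, x ^ 2 ^ (4 * s) = x := fun x => by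
    rw [← hcard]; exact FiniteField.pow_card x
  set c : F → F := fun z => (a * z) ^ 2 ^ (3 * s) + a * z ^ 2 ^ s with hc
  have hB : ∀ x z : F, tr (a * x ^ (2 ^ s + 1)) + tr (a * (x + z) ^ (2 ^ s + 1))
      = tr (a * z ^ (2 ^ s + 1)) + tr (c z * x) := by
    intro x z
    have e1 : tr (a * z * x ^ 2 ^ s) = tr ((a * z) ^ 2 ^ (3 * s) * x) := by
      rw [← tr_frob (a * z * x ^ 2 ^ s) (3 * s), mul_pow (a * z), ← pow_mul, ← pow_add,
        show s + 3 * s = 4 * s by ring, hF]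
    have e2 : (x + z) ^ (2 ^ s + 1) = (x ^ 2 ^ s + z ^ 2 ^ s) * (x + z) := by
      rw [pow_succ, add_pow_char_pow]
    have h2 : ∀ y : ZMod 2, y + y = 0 := by decide
    rw [hc]; simp only [add_mul]
    rw [tr_add, ← e1, e2,
      show a * ((x ^ 2 ^ s + z ^ 2 ^ s) * (x + z)) = a * x ^ (2 ^ s + 1) + (a * z ^ (2 ^ s + 1)
        + (a * z * x ^ 2 ^ s + a * z ^ 2 ^ s * x)) by ring, tr_add, ← add_assoc, h2, zero_add,
      tr_add, tr_add]
  have hc0 : ∀ z, c z = 0 → z = 0 := by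
    intro z hz
    by_contra hz0
    apply han
    have h1 : (a * z) ^ 2 ^ (3 * s) = a * z ^ 2 ^ s := by
      have := eq_neg_of_add_eq_zero_left hz
      rwa [CharTwo.neg_eq] at this
    have h2 : a * z = (a * z ^ 2 ^ s) ^ 2 ^ s := by
      rw [← h1, ← pow_mul, ← pow_add, show 3 * s + s = 4 * s by ring, hF]
    have hq : 1 ≤ 2 ^ s := Nat.one_le_two_pow
    obtain ⟨r, hr⟩ : ∃ r, 2 ^ s = r + 1 := ⟨2 ^ s - 1, by omega⟩
    have hr2 : 2 ^ (2 * s) = (r + 1) ^ 2 := by rw [← hr, ← pow_mul, mul_comm]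
    have hr4 : 2 ^ (4 * s) = (r + 1) ^ 4 := by rw [← hr, ← pow_mul, mul_comm]
    have h3 : a ^ r * z ^ (r * (r + 2)) = 1 := by
      have haz : a * z ≠ 0 := mul_ne_zero ha hz0
      apply mul_left_cancel₀ haz
      rw [mul_one]
      conv_rhs => rw [h2]
      rw [hr]; ring
    have h4 : z ^ (r * (r + 2) * ((r + 1) ^ 2 + 1)) = 1 := by
      have := hF z
      rw [hr4] at this
      apply mul_left_cancel₀ hz0
      rw [mul_one]
      conv_rhs => rw [← this]
      ring
    rw [hr, hr2, Nat.add_sub_cancel]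
    have h5 : (a ^ r * z ^ (r * (r + 2))) ^ ((r + 1) ^ 2 + 1) = 1 := by rw [h3, one_pow]
    rw [mul_pow, ← pow_mul, ← pow_mul, h4, mul_one] at h5
    rw [mul_comm]; exact h5
  calc (∑ x : F, sg (tr (a * x ^ (2 ^ s + 1)))) ^ 2
      = ∑ x : F, ∑ z : F, sg (tr (a * x ^ (2 ^ s + 1))) * sg (tr (a * (x + z) ^ (2 ^ s + 1))) := by
        rw [sq, Finset.sum_mul]
        refine Finset.sum_congr rfl fun x _ => ?_
        rw [Finset.mul_sum]
        exact (Equiv.sum_comp (Equiv.addLeft x) (fun y => sg (tr (a * x ^ (2 ^ s + 1))) *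
          sg (tr (a * y ^ (2 ^ s + 1))))).symm
    _ = ∑ z : F, sg (tr (a * z ^ (2 ^ s + 1))) * ∑ x : F, sg (tr (c z * x)) := by
        rw [Finset.sum_comm]
        refine Finset.sum_congr rfl fun z _ => ?_
        rw [Finset.mul_sum]
        refine Finset.sum_congr rfl fun x _ => ?_
        rw [← sg_add, hB, sg_add]
    _ = 2 ^ (4 * s) := by
        rw [Finset.sum_eq_single 0]
        · have : c 0 = 0 := by simp [hc]
          rw [this]
          simp [tr_zero, sg_zero, hcard]
        · intro z _ hz
          rw [sum_char (fun h => hz (hc0 z h)), mul_zero]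
        · simp

/-- Roots of unity sum. -/
lemma sum_roots {k : ℕ} {ζ : F} (hk : 0 < k) (h : IsPrimitiveRoot ζ k) (f : F → ℤ) :
    ∑ x ∈ Polynomial.nthRootsFinset k (1 : F), f x = ∑ i ∈ range k, f (ζ ^ i) := by
  classical
  symm
  refine Finset.sum_bij (fun i _ => ζ ^ i) ?_ ?_ ?_ ?_
  · intro i _
    rw [Polynomial.mem_nthRootsFinset hk, ← pow_mul, mul_comm, pow_mul, h.pow_eq_one, one_pow]
  · intro i hi j hj hij
    exact h.pow_inj (mem_range.1 hi) (mem_range.1 hj) hij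
  · intro b hb
    rw [Polynomial.mem_nthRootsFinset hk] at hb
    have : NeZero k := ⟨hk.ne'⟩
    obtain ⟨i, hi, hh⟩ := h.eq_pow_of_pow_eq_one hb
    exact ⟨i, mem_range.2 hi, hh⟩
  · intro _ _; rfl

/-- The Gauss period. -/
noncomputable def T (n : ℕ) (a : F) : ℤ :=
  ∑ u ∈ Polynomial.nthRootsFinset n (1 : F), sg (tr (a * u))

lemma sum_periodic (n m : ℕ) (f : ℕ → ℤ) (hf : ∀ i, f (i + n) = f i) :
    ∑ i ∈ range (m * n), f i = m * ∑ i ∈ range n, f i := by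
  induction m with
  | zero => simp
  | succ m ih =>
    have : ∀ i, f (m * n + i) = f i := by
      intro i
      clear ih
      induction m with
      | zero => simp
      | succ m ih => rw [show (m + 1) * n + i = m * n + i + n by ring, hf, ih]
    rw [add_mul, one_mul, Finset.sum_range_add, ih]
    simp only [this]
    push_cast; ring

lemma T_generic (s : ℕ) (hs : 2 ≤ s) (hcard : Fintype.card F = 2 ^ (4 * s)) (n : ℕ)
    (hn : n = (2 ^ (2 * s) + 1) * (2 ^ s - 1)) (α : F) (hα : IsPrimitiveRoot α (2 ^ (4 * s) - 1))
    (hβ : IsPrimitiveRoot (α ^ (2 ^ s + 1)) n) (hn0 : 0 < n)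
    (hmul : 2 ^ (4 * s) - 1 = (2 ^ s + 1) * n)
    (a : F) (ha : a ≠ 0) (han : a ^ n ≠ 1) : T n a = 2 ^ s - 1 := by
  classical
  have hsq := quad_sq s hcard a ha (by rwa [← hn])
  have hN : 0 < 2 ^ (4 * s) - 1 := by rw [hmul]; positivity
  have hS : ∑ x : F, sg (tr (a * x ^ (2 ^ s + 1))) = 1 + (2 ^ s + 1) * T n a := by
    have hset : (Finset.univ : Finset F).erase 0
        = Polynomial.nthRootsFinset (2 ^ (4 * s) - 1) (1 : F) := by
      ext x
      rw [Polynomial.mem_nthRootsFinset hN]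
      simp only [mem_erase, mem_univ, and_true]
      constructor
      · intro hx; rw [← hcard]; exact FiniteField.pow_card_sub_one_eq_one x hx
      · rintro hx rfl
        rw [zero_pow hN.ne'] at hx; exact zero_ne_one hx
    rw [← Finset.add_sum_erase _ _ (mem_univ (0 : F)), hset, sum_roots hN hα, T,
      sum_roots hn0 hβ]
    congr 1
    · simp [tr_zero, sg_zero]
    · rw [hmul]
      rw [sum_periodic]
      · push_cast
        congr 1
        refine Finset.sum_congr rfl fun i _ => ?_
        rw [← pow_mul, ← pow_mul, mul_comm i]
      · intro i
        have : (α ^ (i + n)) ^ (2 ^ s + 1) = (α ^ i) ^ (2 ^ s + 1) := by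
          rw [pow_add α i n, mul_pow, ← pow_mul α n, mul_comm n, pow_mul α _ n, hβ.pow_eq_one, mul_one]
        rw [this]
  rw [hS] at hsq
  have hq4 : (4 : ℤ) ≤ 2 ^ s := by
    calc (4 : ℤ) = 2 ^ 2 := by norm_num
      _ ≤ 2 ^ s := pow_le_pow_right₀ (by norm_num) hs
  rw [show 4 * s = s * 4 by ring, pow_mul] at hsq
  generalize (2 : ℤ) ^ s = q at *
  generalize T n a = t at *
  have hfac : ((q + 1) * (t - (q - 1))) * ((q + 1) * t + 1 + q ^ 2) = 0 := by linear_combination hsq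
  rcases mul_eq_zero.1 hfac with h | h
  · rcases mul_eq_zero.1 h with h | h <;> linarith
  · exfalso
    have hd : (q + 1) ∣ 2 := ⟨-(t + (q - 1)), by linear_combination h⟩
    have := Int.le_of_dvd (by norm_num) hd
    omega

lemma T_mul (n : ℕ) (hn0 : 0 < n) (a v : F) (hv : v ^ n = 1) : T n (a * v) = T n a := by
  classical
  have hv0 : v ≠ 0 := by rintro rfl; rw [zero_pow hn0.ne'] at hv; exact zero_ne_one hv
  unfold T
  refine Finset.sum_bij (fun u _ => v * u) ?_ ?_ ?_ ?_
  · intro u hu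
    rw [Polynomial.mem_nthRootsFinset hn0] at *
    rw [mul_pow, hv, hu, one_mul]
  · intro u _ w _ h; exact mul_left_cancel₀ hv0 h
  · intro b hb
    refine ⟨v⁻¹ * b, ?_, ?_⟩
    · rw [Polynomial.mem_nthRootsFinset hn0] at *
      rw [mul_pow, inv_pow, hv, hb]; simp
    · simp [hv0]
  · intro u _; rw [mul_assoc]

lemma T_sum (n : ℕ) (hn0 : 0 < n) : ∑ a : F, T n a = 0 := by
  classical
  unfold T
  rw [Finset.sum_comm]
  refine Finset.sum_eq_zero fun u hu => ?_
  rw [Polynomial.mem_nthRootsFinset hn0] at hu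
  have hu0 : u ≠ 0 := by rintro rfl; rw [zero_pow hn0.ne'] at hu; exact zero_ne_one hu
  simp only [mul_comm _ u]
  exact sum_char hu0

/-- Nonzero elements which are not n-th roots of unity. -/
def V (F : Type) [Field F] [Fintype F] [DecidableEq F] (n : ℕ) : Finset F :=
  univ.filter fun a => a ≠ 0 ∧ a ^ n ≠ 1

lemma part [DecidableEq F] (n : ℕ) (hn0 : 0 < n) (f : F → ℤ) :
    ∑ a : F, f a = f 0 + ∑ a ∈ Polynomial.nthRootsFinset n (1 : F), f a + ∑ a ∈ V F n, f a := by
  have h1 : (univ : Finset F).filter (fun a => a ^ n = 1) = Polynomial.nthRootsFinset n (1 : F) := by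
    ext x; simp [Polynomial.mem_nthRootsFinset hn0]
  have h2 : (univ : Finset F).filter (fun a => ¬ a ^ n = 1) = insert 0 (V F n) := by
    ext x
    by_cases hx : x = 0
    · subst hx; simp [zero_pow hn0.ne']
    · simp [V, hx]
  rw [← Finset.sum_filter_add_sum_filter_not univ (fun a : F => a ^ n = 1), h1, h2,
    Finset.sum_insert (by simp [V])]
  ring

lemma card_V [DecidableEq F] (n : ℕ) (hn0 : 0 < n) {β : F} (hβ : IsPrimitiveRoot β n) :
    (V F n).card = Fintype.card F - 1 - n := by
  have := part (F := F) n hn0 (fun _ => 1)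
  simp [hβ.card_nthRootsFinset] at this
  omega

lemma T_root (s : ℕ) (hs : 2 ≤ s) (hcard : Fintype.card F = 2 ^ (4 * s)) (n : ℕ)
    (hn : n = (2 ^ (2 * s) + 1) * (2 ^ s - 1)) (α : F) (hα : IsPrimitiveRoot α (2 ^ (4 * s) - 1))
    (hβ : IsPrimitiveRoot (α ^ (2 ^ s + 1)) n) (hn0 : 0 < n)
    (hmul : 2 ^ (4 * s) - 1 = (2 ^ s + 1) * n)
    (a : F) (han : a ^ n = 1) : T n a = - ((2 ^ s) ^ 2 - 2 ^ s + 1) := by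
  classical
  have h1 : T n a = T n (1 : F) := by
    have := T_mul n hn0 1 a han
    rwa [one_mul] at this
  rw [h1]
  have hp := part (F := F) n hn0 (T n)
  rw [T_sum n hn0] at hp
  have h0 : T n (0 : F) = n := by simp [T, tr_zero, sg_zero, hβ.card_nthRootsFinset]
  have hU : ∑ a ∈ Polynomial.nthRootsFinset n (1 : F), T n a = n * T n (1 : F) := by
    rw [Finset.sum_congr rfl (g := fun _ => T n (1 : F))]
    · simp [hβ.card_nthRootsFinset]
    · intro x hx
      rw [Polynomial.mem_nthRootsFinset hn0] at hx
      simpa using T_mul n hn0 1 x hx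
  have hV : ∑ a ∈ V F n, T n a = (2 ^ s * n : ℤ) * (2 ^ s - 1) := by
    rw [Finset.sum_congr rfl (g := fun _ => (2 ^ s - 1 : ℤ))]
    · rw [Finset.sum_const, card_V n hn0 hβ, hcard, hmul, add_mul, one_mul, Nat.add_sub_cancel]
      simp
    · intro x hx
      simp only [V, mem_filter, mem_univ, true_and] at hx
      exact T_generic s hs hcard n hn α hα hβ hn0 hmul x hx.1 hx.2
  rw [h0, hU, hV] at hp
  have hn' : (n : ℤ) ≠ 0 := by exact_mod_cast hn0.ne'
  apply mul_left_cancel₀ hn'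
  linear_combination -hp

/-- The encoding map. -/
noncomputable def enc (n : ℕ) (β : F) : (F × ZMod 2) →ₗ[ZMod 2] (Fin (n + 1) → ZMod 2) where
  toFun p := fun j => if (j : ℕ) < n then tr (p.1 * β ^ (j : ℕ)) + p.2 else p.2
  map_add' p r := by
    funext j
    by_cases h : (j : ℕ) < n
    · simp only [h, if_true, Pi.add_apply, Prod.fst_add, Prod.snd_add, add_mul, tr_add]; ring
    · simp [h]
  map_smul' c p := by
    funext j
    by_cases h : (j : ℕ) < n
    · simp [h, tr, mul_add]
    · simp [h]

lemma enc_castSucc (n : ℕ) (β : F) (p) (i : Fin n) :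
    enc n β p i.castSucc = tr (p.1 * β ^ (i : ℕ)) + p.2 := by
  simp [enc]

lemma enc_last (n : ℕ) (β : F) (p) : enc n β p (Fin.last n) = p.2 := by
  simp [enc]

lemma two_norm (n : ℕ) (hn0 : 0 < n) (β : F) (hβ : IsPrimitiveRoot β n) (p : F × ZMod 2) :
    2 * (hammingNorm (enc n β p) : ℤ) = n + 1 - sg p.2 * (T n p.1 + 1) := by
  have h : (hammingNorm (enc n β p) : ℤ)
      = ∑ j : Fin (n + 1), if enc n β p j ≠ 0 then (1 : ℤ) else 0 := by
    rw [hammingNorm, Finset.sum_boole]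
  rw [h, Finset.mul_sum]
  simp only [sg_ind]
  rw [Fin.sum_univ_castSucc]
  simp only [enc_castSucc, enc_last, sg_add]
  rw [Finset.sum_sub_distrib, ← Finset.sum_mul, T, sum_roots hn0 hβ, Finset.sum_range]
  simp
  ring

lemma range_enc (n : ℕ) (β : F) :
    dualCode (extendedCode (BCHCode n β {1})) = LinearMap.range (enc n β) := by
  classical
  have hmem : ∀ e : Fin (n + 1) → ZMod 2, e ∈ dualCode (extendedCode (BCHCode n β {1})) ↔
      ∀ c : Fin n → ZMod 2, ∑ i : Fin n, c i • β ^ (i : ℕ) = 0 →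
        ∑ i : Fin n, (e i.castSucc + e (Fin.last n)) * c i = 0 := by
    intro e
    have key : ∀ c : Fin n → ZMod 2, ∑ j, e j * extendMap n c j =
        ∑ i : Fin n, (e i.castSucc + e (Fin.last n)) * c i := by
      intro c
      rw [Fin.sum_univ_castSucc]
      simp [extendMap, add_mul, Finset.sum_add_distrib, Finset.mul_sum]
    constructor
    · intro h c hc
      rw [← key]
      exact h _ ⟨c, by intro j hj; rw [mem_singleton] at hj; subst hj; simpa using hc, rfl⟩
    · rintro h _ ⟨c, hc, rfl⟩
      rw [key]
      exact h c (by simpa using hc 1 (by simp))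
  ext e
  rw [hmem]
  constructor
  · intro h
    let ev : (Fin n → ZMod 2) →ₗ[ZMod 2] F := Fintype.linearCombination (ZMod 2) (fun i : Fin n => β ^ (i : ℕ))
    let φ : Module.Dual (ZMod 2) (Fin n → ZMod 2) :=
      Fintype.linearCombination (ZMod 2) (fun i : Fin n => e i.castSucc + e (Fin.last n))
    have hφ : φ ∈ (LinearMap.ker ev).dualAnnihilator := by
      rw [Submodule.mem_dualAnnihilator]
      intro c hc
      have := h c (by simpa [ev, Fintype.linearCombination_apply] using hc)
      simp only [φ, Fintype.linearCombination_apply, smul_eq_mul]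
      simpa only [mul_comm] using this
    rw [← LinearMap.range_dualMap_eq_dualAnnihilator_ker] at hφ
    obtain ⟨g, hg⟩ := hφ
    obtain ⟨a, ha⟩ := exists_rep g
    refine ⟨(a, e (Fin.last n)), ?_⟩
    have h2 : ∀ y : ZMod 2, y + y = 0 := by decide
    funext j
    refine Fin.lastCases ?_ (fun i => ?_) j
    · rw [enc_last]
    · rw [enc_castSucc]
      have := congrArg (fun L => L (Pi.single i 1)) hg
      simp [ev, φ] at this
      simp only
      rw [← ha, this, add_assoc, h2, add_zero]
  · rintro ⟨p, rfl⟩ c hc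
    have h2 : ∀ y : ZMod 2, y + y = 0 := by decide
    have h3 : ∀ i : Fin n, (enc n β p i.castSucc + enc n β p (Fin.last n)) * c i
        = Algebra.trace (ZMod 2) F (p.1 * (c i • β ^ (i : ℕ))) := by
      intro i
      rw [enc_castSucc, enc_last, add_assoc, h2, add_zero, mul_smul_comm, map_smul, smul_eq_mul,
        mul_comm]; rfl
    simp only [h3]
    rw [← map_sum, ← Finset.mul_sum, hc, mul_zero, map_zero]

set_option maxHeartbeats 2000000 in
theorem main (s : ℕ) (hs : 2 ≤ s) (n : ℕ) (hn : n = (2 ^ (2 * s) + 1) * (2 ^ s - 1))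
    (hcard : Fintype.card F = 2 ^ (4 * s))
    (α : F) (hα : orderOf α = 2 ^ (4 * s) - 1)
    (β : F) (hβ : β = α ^ (2 ^ s + 1))
    (E : Submodule (ZMod 2) (Fin (n + 1) → ZMod 2))
    (hE : E = dualCode (extendedCode (BCHCode n β {1}))) :
    Module.finrank (ZMod 2) E = 4 * s + 1 ∧
    minDist E = n + 1 - 2 ^ (3 * s - 1) ∧
    weightCount E 0 = 1 ∧
    weightCount E (n + 1 - 2 ^ (3 * s - 1)) = n ∧
    weightCount E (2 ^ (3 * s - 1) - 2 ^ (2 * s - 1)) = 2 ^ (4 * s) - 1 - n ∧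
    weightCount E (n + 1 - 2 ^ (3 * s - 1) + 2 ^ (2 * s - 1)) = 2 ^ (4 * s) - 1 - n ∧
    weightCount E (2 ^ (3 * s - 1)) = n ∧
    weightCount E (n + 1) = 1 ∧
    ∀ w : ℕ, w ≠ 0 → w ≠ n + 1 - 2 ^ (3 * s - 1) →
      w ≠ 2 ^ (3 * s - 1) - 2 ^ (2 * s - 1) →
      w ≠ n + 1 - 2 ^ (3 * s - 1) + 2 ^ (2 * s - 1) →
      w ≠ 2 ^ (3 * s - 1) → w ≠ n + 1 →
      weightCount E w = 0 := by
  classical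
  obtain ⟨t, rfl⟩ : ∃ t, s = t + 2 := ⟨s - 2, by omega⟩
  obtain ⟨h, hh⟩ : ∃ h : ℕ, h = 2 ^ (t + 1) := ⟨_, rfl⟩
  have hh2 : 2 ≤ h := by
    rw [hh, pow_succ]; have : 1 ≤ 2 ^ t := Nat.one_le_two_pow
    omega
  have hq : 2 ^ (t + 2) = 2 * h := by rw [hh]; ring
  have hq2 : 2 ^ (2 * (t + 2)) = 4 * h ^ 2 := by rw [hh]; ring
  have hq3 : 2 ^ (3 * (t + 2) - 1) = 4 * h ^ 3 := by
    rw [hh, show 3 * (t + 2) - 1 = 3 * t + 5 by omega]; ring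
  have hq21 : 2 ^ (2 * (t + 2) - 1) = 2 * h ^ 2 := by
    rw [hh, show 2 * (t + 2) - 1 = 2 * t + 3 by omega]; ring
  have hq4 : 2 ^ (4 * (t + 2)) = 16 * h ^ 4 := by rw [hh]; ring
  have hn1 : n + 1 + 4 * h ^ 2 = 8 * h ^ 3 + 2 * h := by
    rw [hn, hq, hq2]
    obtain ⟨r, hr⟩ : ∃ r, 2 * h = r + 1 := ⟨2 * h - 1, by omega⟩
    have : 4 * h ^ 2 = (r + 1) ^ 2 := by rw [← hr]; ring
    have h3 : 8 * h ^ 3 = (r + 1) ^ 3 := by rw [← hr]; ring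
    rw [this, h3, hr, Nat.add_sub_cancel]; ring
  have hmul : 2 ^ (4 * (t + 2)) - 1 = (2 ^ (t + 2) + 1) * n := by
    have : 2 ^ (4 * (t + 2)) = (2 ^ (t + 2) + 1) * n + 1 := by
      rw [hq4, hq]
      zify at hn1 ⊢
      have : (n : ℤ) = 8 * h ^ 3 + 2 * h - 4 * h ^ 2 - 1 := by linarith
      rw [this]; ring
    omega
  have hA : 2 * h ^ 2 ≤ h ^ 3 := by rw [pow_succ h 2]; nlinarith [sq_nonneg h]
  have hB : 2 * h ≤ h ^ 2 := by nlinarith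
  have hn0 : 0 < n := by omega
  have hprim : IsPrimitiveRoot α (2 ^ (4 * (t + 2)) - 1) := by
    rw [← hα]; exact IsPrimitiveRoot.orderOf α
  have hpb : IsPrimitiveRoot (α ^ (2 ^ (t + 2) + 1)) n :=
    hprim.pow (by rw [hmul]; positivity) hmul
  have hn0' : (n : ℤ) = 8 * h ^ 3 + 2 * h - 4 * h ^ 2 - 1 := by
    zify at hn1; linarith
  have hqz : (2 : ℤ) ^ (t + 2) = 2 * h := by exact_mod_cast hq
  have hTg := T_generic (t + 2) hs hcard n hn α hprim hpb hn0 hmul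
  have hTr := T_root (t + 2) hs hcard n hn α hprim hpb hn0 hmul
  rw [← hβ] at hpb
  have hT0 : T n (0 : F) = n := by simp [T, tr_zero, sg_zero, hpb.card_nthRootsFinset]
  have hnorm := two_norm n hn0 β hpb
  have hW : 8 * (h : ℤ) ^ 3 = 2 * ((4 * h ^ 3 : ℕ) : ℤ) := by push_cast; ring
  rw [hqz] at hTg hTr
  -- the six weights
  have w00 : hammingNorm (enc n β (0, 0)) = 0 := by
    have := hnorm (0, 0)
    simp only [sg_zero, hT0] at this
    omega
  have w01 : hammingNorm (enc n β (0, 1)) = n + 1 := by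
    have := hnorm (0, 1)
    simp only [sg_one, hT0] at this
    omega
  have wU0 : ∀ a, a ^ n = 1 → hammingNorm (enc n β (a, 0)) = 4 * h ^ 3 := by
    intro a ha
    have := hnorm (a, 0)
    simp only [sg_zero, hTr a ha] at this
    zify; linarith
  have wU1 : ∀ a, a ^ n = 1 → hammingNorm (enc n β (a, 1)) = n + 1 - 4 * h ^ 3 := by
    intro a ha
    have := hnorm (a, 1)
    simp only [sg_one, hTr a ha] at this
    have : hammingNorm (enc n β (a, 1)) + 4 * h ^ 3 = n + 1 := by zify; linarith
    omega
  have wV0 : ∀ a, a ≠ 0 → a ^ n ≠ 1 → hammingNorm (enc n β (a, 0)) = 4 * h ^ 3 - 2 * h ^ 2 := by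
    intro a ha0 ha
    have := hnorm (a, 0)
    simp only [sg_zero, hTg a ha0 ha] at this
    have : hammingNorm (enc n β (a, 0)) + 2 * h ^ 2 = 4 * h ^ 3 := by zify; linarith
    omega
  have wV1 : ∀ a, a ≠ 0 → a ^ n ≠ 1 →
      hammingNorm (enc n β (a, 1)) = n + 1 - 4 * h ^ 3 + 2 * h ^ 2 := by
    intro a ha0 ha
    have := hnorm (a, 1)
    simp only [sg_one, hTg a ha0 ha] at this
    have : hammingNorm (enc n β (a, 1)) + 4 * h ^ 3 = n + 1 + 2 * h ^ 2 := by zify; linarith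
    omega
  have hcases : ∀ p : F × ZMod 2, p = (0, 0) ∨ p = (0, 1) ∨ (p.1 ^ n = 1 ∧ p = (p.1, 0)) ∨
      (p.1 ^ n = 1 ∧ p = (p.1, 1)) ∨ (p.1 ≠ 0 ∧ p.1 ^ n ≠ 1 ∧ p = (p.1, 0)) ∨
      (p.1 ≠ 0 ∧ p.1 ^ n ≠ 1 ∧ p = (p.1, 1)) := by
    rintro ⟨a, b⟩
    have hb : b = 0 ∨ b = 1 := by revert b; decide
    by_cases h0 : a = 0 <;> by_cases h1 : a ^ n = 1 <;> rcases hb with rfl | rfl <;> simp [h0, h1]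
    all_goals (subst h0; simp_all)
  have hroot0 : ∀ a : F, a ^ n = 1 → a ≠ 0 := by
    rintro a ha rfl; rw [zero_pow hn0.ne'] at ha; exact zero_ne_one ha
  have hker : ∀ p : F × ZMod 2, enc n β p = 0 → p = 0 := by
    intro p hp
    have hp0 : hammingNorm (enc n β p) = 0 := by rw [hp]; simp
    rcases hcases p with e | e | ⟨h1, e⟩ | ⟨h1, e⟩ | ⟨h0, h1, e⟩ | ⟨h0, h1, e⟩
    · exact e
    · rw [e, w01] at hp0; omega
    · rw [e, wU0 _ h1] at hp0; omega
    · rw [e, wU1 _ h1] at hp0; omega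
    · rw [e, wV0 _ h0 h1] at hp0; omega
    · rw [e, wV1 _ h0 h1] at hp0; omega
  have hinj : Function.Injective (enc n β) := by
    rw [← LinearMap.ker_eq_bot, LinearMap.ker_eq_bot']
    exact hker
  have hEr : E = LinearMap.range (enc n β) := by rw [hE, range_enc]
  have hcount : ∀ (w : ℕ) (S : Finset (F × ZMod 2)),
      (∀ p, hammingNorm (enc n β p) = w ↔ p ∈ S) → weightCount E w = S.card := by
    intro w S hS
    unfold weightCount
    have : {c : Fin (n + 1) → ZMod 2 | c ∈ E ∧ hammingNorm c = w} = enc n β '' (S : Set (F × ZMod 2)) := by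
      ext c
      simp only [Set.mem_setOf_eq, hEr, LinearMap.mem_range, Set.mem_image, mem_coe, ← hS]
      constructor
      · rintro ⟨⟨p, rfl⟩, hw⟩; exact ⟨p, hw, rfl⟩
      · rintro ⟨p, hw, rfl⟩; exact ⟨⟨p, rfl⟩, hw⟩
    rw [this, Set.ncard_image_of_injective _ hinj, Set.ncard_coe_finset]
  rw [hq3, hq21]
  have hUm : ∀ a : F, a ∈ Polynomial.nthRootsFinset n (1 : F) ↔ a ^ n = 1 := fun a =>
    Polynomial.mem_nthRootsFinset hn0 _
  have hVm : ∀ a : F, a ∈ V F n ↔ a ≠ 0 ∧ a ^ n ≠ 1 := fun a => by simp [V]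
  have h01 : (0 : ZMod 2) ≠ 1 := by decide
  have hz : (0 : F) ^ n ≠ 1 := fun hx => hroot0 0 hx rfl
  have hcardF : (V F n).card = 2 ^ (4 * (t + 2)) - 1 - n := by rw [card_V n hn0 hpb, hcard]
  have hcardU : (Polynomial.nthRootsFinset n (1 : F)).card = n := hpb.card_nthRootsFinset
  have fin : Module.finrank (ZMod 2) E = 4 * (t + 2) + 1 := by
    rw [hEr, LinearMap.finrank_range_of_inj hinj, Module.finrank_prod, Module.finrank_self]
    congr 1
    have := Module.card_eq_pow_finrank (K := ZMod 2) (V := F)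
    rw [hcard, ZMod.card] at this
    exact (Nat.pow_right_injective le_rfl this).symm
  refine ⟨fin, ?_, ?_, ?_, ?_, ?_, ?_, ?_, ?_⟩
  · unfold minDist
    apply le_antisymm
    · apply Nat.sInf_le
      refine ⟨enc n β (1, 1), ?_, ?_, wU1 1 (one_pow n)⟩
      · rw [hEr]; exact ⟨_, rfl⟩
      · intro h0
        have := hker _ h0
        simp at this
    · apply le_csInf
      · refine ⟨_, enc n β (1, 1), ?_, ?_, rfl⟩
        · rw [hEr]; exact ⟨_, rfl⟩
        · intro h0
          have := hker _ h0
          simp at this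
      · rintro w ⟨c, hc, hc0, rfl⟩
        rw [hEr] at hc
        obtain ⟨p, rfl⟩ := hc
        rcases hcases p with e | e | ⟨h1, e⟩ | ⟨h1, e⟩ | ⟨h0, h1, e⟩ | ⟨h0, h1, e⟩
        · exact absurd (by rw [e]; exact map_zero _) hc0
        · rw [e, w01]; omega
        · rw [e, wU0 _ h1]; omega
        · rw [e, wU1 _ h1]
        · rw [e, wV0 _ h0 h1]; omega
        · rw [e, wV1 _ h0 h1]; omega
  · rw [hcount _ {(0, 0)}]
    · simp
    intro p
    rcases hcases p with e | e | ⟨h1, e⟩ | ⟨h1, e⟩ | ⟨h0, h1, e⟩ | ⟨h0, h1, e⟩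
    · rw [e, w00]; simp
    · rw [e, w01]; simp
    · rw [e, wU0 _ h1]; simp [hroot0 _ h1]; omega
    · rw [e, wU1 _ h1]; simp; omega
    · rw [e, wV0 _ h0 h1]; simp [h0]; omega
    · rw [e, wV1 _ h0 h1]; simp; omega
  · rw [hcount _ (Polynomial.nthRootsFinset n (1 : F) ×ˢ {1})]
    · rw [card_product, hcardU]; simp
    intro p
    simp only [mem_product, hUm, mem_singleton]
    rcases hcases p with e | e | ⟨h1, e⟩ | ⟨h1, e⟩ | ⟨h0, h1, e⟩ | ⟨h0, h1, e⟩
    · rw [e, w00]; simp; omega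
    · rw [e, w01]; simp [hz]; omega
    · rw [e, wU0 _ h1]; simp; omega
    · rw [e, wU1 _ h1]; simp [h1]
    · rw [e, wV0 _ h0 h1]; simp; omega
    · rw [e, wV1 _ h0 h1]; simp [h1]; omega
  · rw [hcount _ (V F n ×ˢ {0})]
    · rw [card_product, hcardF]; simp
    intro p
    simp only [mem_product, hVm, mem_singleton]
    rcases hcases p with e | e | ⟨h1, e⟩ | ⟨h1, e⟩ | ⟨h0, h1, e⟩ | ⟨h0, h1, e⟩
    · rw [e, w00]; simp; omega
    · rw [e, w01]; simp; omega
    · rw [e, wU0 _ h1]; simp [h1]; omega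
    · rw [e, wU1 _ h1]; simp; omega
    · rw [e, wV0 _ h0 h1]; simp [h0, h1]
    · rw [e, wV1 _ h0 h1]; simp; omega
  · rw [hcount _ (V F n ×ˢ {1})]
    · rw [card_product, hcardF]; simp
    intro p
    simp only [mem_product, hVm, mem_singleton]
    rcases hcases p with e | e | ⟨h1, e⟩ | ⟨h1, e⟩ | ⟨h0, h1, e⟩ | ⟨h0, h1, e⟩
    · rw [e, w00]; simp; omega
    · rw [e, w01]; simp; omega
    · rw [e, wU0 _ h1]; simp; omega
    · rw [e, wU1 _ h1]; simp [h1]; omega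
    · rw [e, wV0 _ h0 h1]; simp; omega
    · rw [e, wV1 _ h0 h1]; simp [h0, h1]
  · rw [hcount _ (Polynomial.nthRootsFinset n (1 : F) ×ˢ {0})]
    · rw [card_product, hcardU]; simp
    intro p
    simp only [mem_product, hUm, mem_singleton]
    rcases hcases p with e | e | ⟨h1, e⟩ | ⟨h1, e⟩ | ⟨h0, h1, e⟩ | ⟨h0, h1, e⟩
    · rw [e, w00]; simp [hz]; omega
    · rw [e, w01]; simp; omega
    · rw [e, wU0 _ h1]; simp [h1]
    · rw [e, wU1 _ h1]; simp; omega
    · rw [e, wV0 _ h0 h1]; simp [h1]; omega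
    · rw [e, wV1 _ h0 h1]; simp; omega
  · rw [hcount _ {(0, 1)}]
    · simp
    intro p
    rcases hcases p with e | e | ⟨h1, e⟩ | ⟨h1, e⟩ | ⟨h0, h1, e⟩ | ⟨h0, h1, e⟩
    · rw [e, w00]; simp
    · rw [e, w01]; simp
    · rw [e, wU0 _ h1]; simp; omega
    · rw [e, wU1 _ h1]; simp [hroot0 _ h1]; omega
    · rw [e, wV0 _ h0 h1]; simp; omega
    · rw [e, wV1 _ h0 h1]; simp [h0]; omega
  · intro w a0 a1 a2 a3 a4 a5
    rw [hcount w ∅]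
    · simp
    intro p
    rcases hcases p with e | e | ⟨h1, e⟩ | ⟨h1, e⟩ | ⟨h0, h1, e⟩ | ⟨h0, h1, e⟩
    · rw [e, w00]; simp; omega
    · rw [e, w01]; simp; omega
    · rw [e, wU0 _ h1]; simp; omega
    · rw [e, wU1 _ h1]; simp; omega
    · rw [e, wV0 _ h0 h1]; simp; omega
    · rw [e, wV1 _ h0 h1]; simp; omega

end

end BCHProof

theorem stmt_5 (s : ℕ) (hs : 2 ≤ s) (n : ℕ) (hn : n = (2 ^ (2 * s) + 1) * (2 ^ s - 1))
    (α : GaloisField 2 (4 * s)) (hα : orderOf α = 2 ^ (4 * s) - 1)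
    (β : GaloisField 2 (4 * s)) (hβ : β = α ^ (2 ^ s + 1))
    (E : Submodule (ZMod 2) (Fin (n + 1) → ZMod 2))
    (hE : E = dualCode (extendedCode (BCHCode n β {1}))) :
    Module.finrank (ZMod 2) E = 4 * s + 1 ∧
    minDist E = n + 1 - 2 ^ (3 * s - 1) ∧
    weightCount E 0 = 1 ∧
    weightCount E (n + 1 - 2 ^ (3 * s - 1)) = n ∧
    weightCount E (2 ^ (3 * s - 1) - 2 ^ (2 * s - 1)) = 2 ^ (4 * s) - 1 - n ∧
    weightCount E (n + 1 - 2 ^ (3 * s - 1) + 2 ^ (2 * s - 1)) = 2 ^ (4 * s) - 1 - n ∧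
    weightCount E (2 ^ (3 * s - 1)) = n ∧
    weightCount E (n + 1) = 1 ∧
    ∀ w : ℕ, w ≠ 0 → w ≠ n + 1 - 2 ^ (3 * s - 1) →
      w ≠ 2 ^ (3 * s - 1) - 2 ^ (2 * s - 1) →
      w ≠ n + 1 - 2 ^ (3 * s - 1) + 2 ^ (2 * s - 1) →
      w ≠ 2 ^ (3 * s - 1) → w ≠ n + 1 →
      weightCount E w = 0 := by
  classical
  haveI : Fintype (GaloisField 2 (4 * s)) := Fintype.ofFinite _
  have hcard : Fintype.card (GaloisField 2 (4 * s)) = 2 ^ (4 * s) := by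
    rw [← Nat.card_eq_fintype_card]
    exact GaloisField.card 2 (4 * s) (by omega)
  exact BCHProof.main s hs n hn hcard α hα β hβ E hE
end

section
/- Let s ≥ 8. The code C_{(2,n,6,0)} has length n, dimension n − 8s − 1, and minimum distance exactly 6, and it is distance-optimal with respect to the sphere packing bound: every binary linear code of length n and dimension n − 8s − 1 has minimum distance at most 6. -/
open Finset

open Polynomial in
lemma aux_bch_bound {F : Type} [Field F] [Algebra (ZMod 2) F] (n : ℕ) (β : F)
    (hβ : orderOf β = n) (c : Fin n → ZMod 2)
    (hc : c ∈ BCHCode n β {0, 1, 2, 3, 4}) (h0 : c ≠ 0) : 6 ≤ hammingNorm c := by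
  classical
  by_contra hlt
  have hinj : ∀ i j : Fin n, β ^ (i : ℕ) = β ^ (j : ℕ) → i = j := by
    intro i j h
    apply Fin.ext
    exact pow_injOn_Iio_orderOf (by simp [hβ]) (by simp [hβ]) h
  obtain ⟨i0, hi0⟩ : ∃ i, c i ≠ 0 := by
    by_contra h
    push Not at h
    exact h0 (funext h)
  set S : Finset (Fin n) := Finset.univ.filter (fun i => c i ≠ 0) with hS
  have hcard : S.card ≤ 5 := by
    have : hammingNorm c = S.card := rfl
    omega
  have hi0S : i0 ∈ S := by simp [hS, hi0]
  set P : F[X] := ∏ i ∈ S.erase i0, (X - C (β ^ (i : ℕ))) with hP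
  have hdeg : P.natDegree < 5 := by
    rw [hP, natDegree_prod_of_monic _ _ (fun i _ => monic_X_sub_C _)]
    simp only [natDegree_X_sub_C, Finset.sum_const, smul_eq_mul, mul_one]
    rw [Finset.card_erase_of_mem hi0S]
    have := Finset.card_pos.2 ⟨i0, hi0S⟩
    omega
  have h1 : ∑ i : Fin n, c i • P.eval (β ^ (i : ℕ)) = 0 := by
    have : ∀ i : Fin n, c i • P.eval (β ^ (i : ℕ)) =
        ∑ j ∈ Finset.range 5, P.coeff j * (c i • β ^ (j * (i : ℕ))) := by
      intro i
      rw [eval_eq_sum_range' hdeg, Finset.smul_sum]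
      refine Finset.sum_congr rfl fun j _ => ?_
      rw [mul_smul_comm, ← pow_mul, mul_comm j]
    simp_rw [this]
    rw [Finset.sum_comm]
    refine Finset.sum_eq_zero fun j hj => ?_
    rw [← Finset.mul_sum, hc j, mul_zero]
    have := Finset.mem_range.1 hj
    interval_cases j <;> simp
  have h2 : ∑ i : Fin n, c i • P.eval (β ^ (i : ℕ)) = c i0 • P.eval (β ^ (i0 : ℕ)) := by
    refine Finset.sum_eq_single i0 ?_ (by simp)
    intro i _ hi
    by_cases hci : c i = 0
    · simp [hci]
    · have : P.eval (β ^ (i : ℕ)) = 0 := by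
        rw [hP, eval_prod]
        refine Finset.prod_eq_zero (i := i) ?_ (by simp)
        simp [hS, hi, hci]
      simp [this]
  rw [h1] at h2
  rcases smul_eq_zero.1 h2.symm with h | h
  · exact hi0 h
  · rw [hP, eval_prod, Finset.prod_eq_zero_iff] at h
    obtain ⟨i, hi, h⟩ := h
    simp only [eval_sub, eval_X, eval_C, sub_eq_zero] at h
    exact (Finset.mem_erase.1 hi).1 (hinj _ _ h).symm

lemma aux_pack (n k : ℕ) (hk : 2 ^ k < n.choose 3)
    (D : Submodule (ZMod 2) (Fin n → ZMod 2)) (hD : n ≤ Module.finrank (ZMod 2) D + k) :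
    ∃ c ∈ D, c ≠ 0 ∧ hammingNorm c ≤ 6 := by
  classical
  let ind : Finset (Fin n) → (Fin n → ZMod 2) := fun A i => if i ∈ A then 1 else 0
  have hfin : Finite ((Fin n → ZMod 2) ⧸ D) := inferInstance
  have : Fintype ((Fin n → ZMod 2) ⧸ D) := Fintype.ofFinite _
  have hq : Fintype.card ((Fin n → ZMod 2) ⧸ D) ≤ 2 ^ k := by
    rw [Module.card_eq_pow_finrank (K := ZMod 2), ZMod.card]
    apply Nat.pow_le_pow_right (by norm_num)
    have := D.finrank_quotient_add_finrank
    rw [Module.finrank_fin_fun] at this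
    omega
  obtain ⟨A, hA, B, hB, hne, heq⟩ := Finset.exists_ne_map_eq_of_card_lt_of_maps_to
    (s := Finset.powersetCard 3 (Finset.univ : Finset (Fin n)))
    (t := (Finset.univ : Finset ((Fin n → ZMod 2) ⧸ D)))
    (f := fun A => D.mkQ (ind A)) (by simpa using lt_of_le_of_lt hq hk)
    (by intro x _; simp)
  simp only [Finset.mem_powersetCard, Finset.subset_univ, true_and] at hA hB
  refine ⟨ind A - ind B, ?_, ?_, ?_⟩
  · simp only [Submodule.mkQ_apply] at heq
    exact (Submodule.Quotient.eq D).1 heq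
  · intro h
    apply hne
    ext i
    have := congrFun h i
    simp only [ind, Pi.sub_apply, Pi.zero_apply] at this
    by_cases h1 : i ∈ A <;> by_cases h2 : i ∈ B <;> simp_all
  · have hsub : (Finset.univ.filter fun i => (ind A - ind B) i ≠ 0) ⊆ A ∪ B := by
      intro i hi
      by_contra h
      simp only [Finset.mem_union, not_or] at h
      simp [ind, h.1, h.2] at hi
    have h1 := Finset.card_le_card hsub
    have h2 := Finset.card_union_le A B
    have h3 : hammingNorm (ind A - ind B) =
      (Finset.univ.filter fun i => (ind A - ind B) i ≠ 0).card := rfl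
    omega

open Polynomial in
lemma aux_aeval_surj {F : Type} [Field F] [Algebra (ZMod 2) F] [Finite F] (s : ℕ) (hs : 0 < s)
    (hF : Module.finrank (ZMod 2) F = 4 * s) (x : F) (hx0 : x ≠ 0)
    (hx : ∀ m, 0 < m → x ^ m = 1 → 2 ^ (2 * s) ≤ m) (y : F) :
    ∃ p : (ZMod 2)[X], aeval x p = y := by
  classical
  have : Fintype F := Fintype.ofFinite _
  set K := IntermediateField.adjoin (ZMod 2) {x} with hK
  have hxK : x ∈ K := IntermediateField.mem_adjoin_simple_self _ x
  have hdvd : Module.finrank (ZMod 2) K ∣ 4 * s := by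
    rw [← hF, ← Module.finrank_mul_finrank (ZMod 2) K F]
    exact dvd_mul_right _ _
  have : Fintype K := Fintype.ofFinite _
  have hcard : Fintype.card K = 2 ^ Module.finrank (ZMod 2) K := by
    rw [Module.card_eq_pow_finrank (K := ZMod 2), ZMod.card]
  have hpos : 0 < Module.finrank (ZMod 2) K := Module.finrank_pos
  have h1 : x ^ (Fintype.card K - 1) = 1 := by
    have := FiniteField.pow_card_sub_one_eq_one (⟨x, hxK⟩ : K) (by
      intro h; exact hx0 (congrArg Subtype.val h))
    exact congrArg Subtype.val this
  have h2 : 2 ^ (2 * s) ≤ Fintype.card K - 1 := by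
    refine hx _ ?_ h1
    have := Fintype.one_lt_card (α := K)
    omega
  have h3 : 2 * s < Module.finrank (ZMod 2) K := by
    rw [hcard] at h2
    have : 2 ^ (2 * s) < 2 ^ Module.finrank (ZMod 2) K := by
      have : 0 < 2 ^ (2 * s) := by positivity
      omega
    exact (Nat.pow_lt_pow_iff_right (by norm_num)).1 this
  have h4 : Module.finrank (ZMod 2) K = 4 * s := by
    obtain ⟨t, ht⟩ := hdvd
    have : t < 2 := by
      by_contra h
      have : Module.finrank (ZMod 2) K * 2 ≤ Module.finrank (ZMod 2) K * t :=
        Nat.mul_le_mul_left _ (by omega)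
      omega
    interval_cases t <;> omega
  have hKtop : K.toSubalgebra = ⊤ := by
    apply Subalgebra.toSubmodule_injective
    rw [Algebra.top_toSubmodule]
    apply Submodule.eq_top_of_finrank_eq
    rw [hF]; exact h4
  rw [hK, IntermediateField.adjoin_simple_toSubalgebra_of_isAlgebraic (IsAlgebraic.of_finite _ x),
    Algebra.adjoin_singleton_eq_range_aeval] at hKtop
  have : y ∈ (aeval (R := ZMod 2) x).range := by rw [hKtop]; trivial
  exact this

lemma aux_n (s : ℕ) (hs : 8 ≤ s) (n : ℕ) (hn : n = (2 ^ (2 * s) + 1) * (2 ^ s - 1)) :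
    ∃ q, q = 2 ^ s ∧ 256 ≤ q ∧ 2 ^ (2 * s) = q ^ 2 ∧ 2 ^ (3 * s) = q ^ 3 ∧ 2 ^ (4 * s) = q ^ 4 ∧
      n + q ^ 2 + 1 = q ^ 3 + q ∧ n * (q + 1) + 1 = q ^ 4 ∧ 3 * q ^ 2 < n ∧ 3 * q ^ 3 < 4 * n := by
  refine ⟨2 ^ s, rfl, ?_, ?_, ?_, ?_, ?_⟩
  · calc 256 = 2 ^ 8 := by norm_num
      _ ≤ 2 ^ s := Nat.pow_le_pow_right (by norm_num) hs
  · rw [mul_comm, pow_mul]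
  · rw [mul_comm, pow_mul]
  · rw [mul_comm, pow_mul]
  have hq : 256 ≤ 2 ^ s := calc 256 = 2 ^ 8 := by norm_num
      _ ≤ 2 ^ s := Nat.pow_le_pow_right (by norm_num) hs
  have e : 2 ^ (2 * s) = (2 ^ s) ^ 2 := by rw [mul_comm, pow_mul]
  rw [e] at hn
  generalize 2 ^ s = q at *
  obtain ⟨r, rfl⟩ : ∃ r, q = r + 1 := ⟨q - 1, by omega⟩
  simp only [Nat.add_sub_cancel] at hn
  subst hn
  have hr : 255 ≤ r := by omega
  refine ⟨by ring, by ring, by nlinarith, ?_⟩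
  nlinarith [mul_le_mul hr hr (by norm_num) (by omega)]

lemma aux_three {F : Type} [Field F] (s : ℕ) (hs : 8 ≤ s) (n : ℕ)
    (hn : n = (2 ^ (2 * s) + 1) * (2 ^ s - 1)) (β : F) (hβ : orderOf β = n) (i : ℕ)
    (hi : i < 4 * s) : β ^ (2 ^ i) ≠ β ^ 3 := by
  intro h
  obtain ⟨q, hq, hq256, h2, h3, h4, e1, e2, e3, e4⟩ := aux_n s hs n hn
  have hinj : ∀ a b, a < n → b < n → β ^ a = β ^ b → a = b := by
    intro a b ha hb h
    exact pow_injOn_Iio_orderOf (by simpa [hβ]) (by simpa [hβ]) h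
  have hodd : ∀ k m, 2 ^ k = 3 * 2 ^ m → False := by
    intro k m h
    have h3 : 3 ∣ 2 ^ k := ⟨_, h⟩
    have := Nat.Prime.dvd_of_dvd_pow Nat.prime_three h3
    omega
  have hbig : 3 * q < n := by nlinarith
  by_cases hi3 : i < 3 * s
  · have hle : 2 * 2 ^ i ≤ q ^ 3 := by
      rw [← h3, ← pow_succ']
      exact Nat.pow_le_pow_right (by norm_num) (by omega)
    have := hinj _ _ (by omega) (by omega) h
    exact hodd i 0 (by omega)
  · obtain ⟨k, rfl⟩ : ∃ k, i = 3 * s + k := ⟨i - 3 * s, by omega⟩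
    have hk : 2 ^ k < q := by
      rw [hq]; exact Nat.pow_lt_pow_right (by norm_num) (by omega)
    have hβ4 : β ^ (q ^ 4) = β := by
      rw [← e2, pow_succ, pow_mul, ← hβ, pow_orderOf_eq_one]; simp
    have h' : β ^ (2 ^ k) = β ^ (3 * q) := by
      rw [pow_mul, ← h, ← pow_mul, pow_add, h3]
      rw [show q ^ 3 * 2 ^ k * q = q ^ 4 * 2 ^ k by ring, pow_mul, hβ4]
    have := hinj _ _ (by nlinarith) hbig h'
    exact hodd k s (by rw [this, hq])

open Polynomial in
lemma aux_not_root {F : Type} [Field F] [Algebra (ZMod 2) F] [Finite F] (s : ℕ) (hs : 8 ≤ s)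
    (hF : Module.finrank (ZMod 2) F = 4 * s) (n : ℕ)
    (hn : n = (2 ^ (2 * s) + 1) * (2 ^ s - 1)) (β : F) (hβ : orderOf β = n) :
    aeval (β ^ 3) (minpoly (ZMod 2) β) ≠ 0 := by
  intro h
  obtain ⟨σ, hσ⟩ := minpoly.exists_algEquiv_of_root' (K := ZMod 2) (y := β) (x := β ^ 3)
    (IsAlgebraic.of_finite _ _) h
  obtain ⟨⟨i, hi⟩, rfl⟩ := (FiniteField.bijective_frobeniusAlgEquivOfAlgebraic_pow (ZMod 2) F).2 σ
  simp only [AlgEquiv.coe_pow, FiniteField.coe_frobeniusAlgEquivOfAlgebraic_iterate,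
    ZMod.card] at hσ
  rw [hF] at hi
  exact aux_three s hs n hn β hβ i hi hσ

open Polynomial in
lemma aux_word {F : Type} [Field F] [Algebra (ZMod 2) F] (n : ℕ) (hn : 0 < n) (β : F)
    (hβ : orderOf β = n) (p : (ZMod 2)[X]) :
    ∃ c : Fin n → ZMod 2, ∀ j : ℕ, ∑ i : Fin n, c i • β ^ (j * (i : ℕ)) = aeval (β ^ j) p := by
  have hm : (X ^ n - 1 : (ZMod 2)[X]).Monic := by
    simpa using monic_X_pow_sub_C (1 : ZMod 2) hn.ne'
  have hd : (X ^ n - 1 : (ZMod 2)[X]).natDegree = n := by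
    simpa using natDegree_X_pow_sub_C (n := n) (r := (1 : ZMod 2))
  refine ⟨fun i => (p %ₘ (X ^ n - 1)).coeff i, fun j => ?_⟩
  have h1 : (p %ₘ (X ^ n - 1)).natDegree < n := by
    have := natDegree_modByMonic_lt p hm (by
      intro h; rw [h] at hd; simp at hd; omega)
    omega
  have h2 : aeval (β ^ j) p = aeval (β ^ j) (p %ₘ (X ^ n - 1)) := by
    conv_lhs => rw [← modByMonic_add_div p (X ^ n - 1)]
    have : (β ^ j) ^ n = 1 := by
      rw [← pow_mul, mul_comm, pow_mul, ← hβ, pow_orderOf_eq_one, one_pow]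
    simp [this]
  rw [h2, aeval_eq_sum_range' h1, ← Fin.sum_univ_eq_sum_range
    (fun i => (p %ₘ (X ^ n - 1)).coeff i • (β ^ j) ^ i)]
  simp [pow_mul]

/-- The syndrome map. -/
def synMap {F : Type} [Field F] [Algebra (ZMod 2) F] (n : ℕ) (β : F) (j : ℕ) :
    (Fin n → ZMod 2) →ₗ[ZMod 2] F where
  toFun c := ∑ i : Fin n, c i • β ^ (j * (i : ℕ))
  map_add' a b := by simp [add_smul, Finset.sum_add_distrib]
  map_smul' r a := by simp [Finset.smul_sum, mul_smul]

/-- The parity map. -/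
def parMap (n : ℕ) : (Fin n → ZMod 2) →ₗ[ZMod 2] ZMod 2 where
  toFun c := ∑ i : Fin n, c i
  map_add' a b := by simp [Finset.sum_add_distrib]
  map_smul' r a := by simp [Finset.mul_sum]

lemma aux_par {F : Type} [Field F] [Algebra (ZMod 2) F] (n : ℕ) (β : F) (c : Fin n → ZMod 2) :
    synMap n β 0 c = algebraMap (ZMod 2) F (parMap n c) := by
  simp [synMap, parMap, Algebra.smul_def]

lemma aux_double {F : Type} [Field F] [Algebra (ZMod 2) F] (n : ℕ) (β : F) (j : ℕ)
    (c : Fin n → ZMod 2) : synMap n β (2 * j) c = (synMap n β j c) ^ 2 := by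
  have : CharP F 2 := charP_of_injective_algebraMap (algebraMap (ZMod 2) F).injective 2
  change (∑ i : Fin n, c i • β ^ (2 * j * (i : ℕ))) = (∑ i : Fin n, c i • β ^ (j * (i : ℕ))) ^ 2
  rw [sum_pow_char]
  refine Finset.sum_congr rfl fun i _ => ?_
  rw [smul_pow, ZMod.pow_card, ← pow_mul]
  congr 2; ring

lemma aux_ker {F : Type} [Field F] [Algebra (ZMod 2) F] (n : ℕ) (β : F) :
    BCHCode n β {0, 1, 2, 3, 4} =
      LinearMap.ker ((parMap n).prod ((synMap n β 1).prod (synMap n β 3))) := by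
  ext c
  have h : c ∈ BCHCode n β {0, 1, 2, 3, 4} ↔
    ∀ j ∈ ({0, 1, 2, 3, 4} : Finset ℕ), synMap n β j c = 0 := Iff.rfl
  rw [h]
  have h2 := aux_double n β 1 c
  have h4 := aux_double n β 2 c
  norm_num at h2 h4
  simp only [Finset.mem_insert, Finset.mem_singleton, forall_eq_or_imp, forall_eq,
    LinearMap.mem_ker, LinearMap.prod_apply, Function.prod_apply, Prod.mk_eq_zero, aux_par, map_eq_zero, h2, h4]
  constructor
  · rintro ⟨a, b, _, d, _⟩; exact ⟨a, b, d⟩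
  · rintro ⟨a, b, d⟩; simp [a, b, d]

open Polynomial in
lemma aux_surj {F : Type} [Field F] [Algebra (ZMod 2) F] [Finite F] (s : ℕ) (hs : 8 ≤ s)
    (hF : Module.finrank (ZMod 2) F = 4 * s) (n : ℕ)
    (hn : n = (2 ^ (2 * s) + 1) * (2 ^ s - 1)) (β : F) (hβ : orderOf β = n) :
    Function.Surjective ((parMap n).prod ((synMap n β 1).prod (synMap n β 3))) := by
  rintro ⟨a, b, c⟩
  obtain ⟨q, hq, hq256, h2, h3, h4, e1, e2, e3, e4⟩ := aux_n s hs n hn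
  have hn0 : 0 < n := by omega
  have hβ0 : β ≠ 0 := by
    rintro rfl
    simp at hβ; omega
  have hord : ∀ m, 0 < m → β ^ m = 1 → n ≤ m := by
    intro m hm h
    rw [← hβ]; exact orderOf_le_of_pow_eq_one hm h
  have hone : β ≠ 1 := by
    rintro rfl
    have := hord 1 one_pos (by simp)
    nlinarith
  have hone3 : β ^ 3 ≠ 1 := by
    intro h
    have := hord 3 (by norm_num) h
    nlinarith
  have s1 := aux_aeval_surj s (by omega) hF β hβ0 (by
    intro m hm h
    have := hord m hm h
    omega)
  have s3 := aux_aeval_surj s (by omega) hF (β ^ 3) (pow_ne_zero _ hβ0) (by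
    intro m hm h
    rw [← pow_mul] at h
    have := hord (3 * m) (by omega) h
    omega)
  have i1 : IsIntegral (ZMod 2) β := Algebra.IsIntegral.isIntegral _
  have i3 : IsIntegral (ZMod 2) (β ^ 3) := Algebra.IsIntegral.isIntegral _
  set m1 := minpoly (ZMod 2) β with hm1
  set m3 := minpoly (ZMod 2) (β ^ 3) with hm3
  have r13 : aeval (β ^ 3) m1 ≠ 0 := aux_not_root s hs hF n hn β hβ
  have r31 : aeval β m3 ≠ 0 := by
    intro h
    have : m1 = m3 := minpoly.eq_of_irreducible_of_monic (minpoly.irreducible i3) h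
      (minpoly.monic i3) |>.symm
    apply r13
    rw [this, hm3, minpoly.aeval]
  have r11 : aeval β m1 = 0 := minpoly.aeval _ _
  have r33 : aeval (β ^ 3) m3 = 0 := minpoly.aeval _ _
  have key : ∀ x : F, x ≠ 1 → (minpoly (ZMod 2) x).eval 1 ≠ 0 := by
    intro x hx h
    have ix : IsIntegral (ZMod 2) x := Algebra.IsIntegral.isIntegral _
    have := minpoly.root ix h
    apply hx
    rw [← this]; simp
  have r10 : m1.eval 1 ≠ 0 := key _ hone
  have r30 : m3.eval 1 ≠ 0 := key _ hone3
  obtain ⟨p1, hp1⟩ := s1 (b / (aeval β ((X - 1) * m3)))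
  obtain ⟨p3, hp3⟩ := s3 (c / (aeval (β ^ 3) ((X - 1) * m1)))
  obtain ⟨w, hw⟩ := aux_word n hn0 β hβ
    (C (a / (m1 * m3).eval 1) * (m1 * m3) + p1 * ((X - 1) * m3) + p3 * ((X - 1) * m1))
  refine ⟨w, ?_⟩
  have w0 : synMap n β 0 w = _ := hw 0
  have w1 : synMap n β 1 w = _ := hw 1
  have w3 : synMap n β 3 w = _ := hw 3
  simp only [LinearMap.prod_apply, Function.prod_apply, Prod.mk.injEq]
  refine ⟨?_, ?_, ?_⟩
  · rw [aux_par, pow_zero] at w0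
    apply (algebraMap (ZMod 2) F).injective
    rw [w0, ← map_one (algebraMap (ZMod 2) F), aeval_algebraMap_apply]
    congr 1
    simp
    exact div_mul_cancel₀ _ (mul_ne_zero r10 r30)
  · rw [w1, pow_one]
    have : aeval β ((X - 1) * m3) ≠ 0 := by
      simp [r31, sub_eq_zero, hone]
    rw [map_add, map_add, map_mul _ p1, hp1, div_mul_cancel₀ _ this]
    simp [r11]
  · rw [w3]
    have : aeval (β ^ 3) ((X - 1) * m1) ≠ 0 := by
      simp [r13, sub_eq_zero, hone3]
    rw [map_add, map_add, map_mul _ p3, hp3, div_mul_cancel₀ _ this]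
    simp [r33]

lemma aux_choose (s : ℕ) (hs : 8 ≤ s) (n : ℕ) (hn : n = (2 ^ (2 * s) + 1) * (2 ^ s - 1)) :
    2 ^ (8 * s + 1) < n.choose 3 := by
  obtain ⟨q, hq, hq256, h2, h3, h4, e1, e2, e3, e4⟩ := aux_n s hs n hn
  have hc : n.choose 3 * 6 = n * (n - 1) * (n - 2) := by
    have := Nat.descFactorial_eq_factorial_mul_choose n 3
    simp only [Nat.descFactorial, Nat.factorial] at this
    have e : n * (n - 1) * (n - 2) = (n - 2) * ((n - 1) * (n * 1)) := by ring
    rw [e]; simp at this ⊢; linarith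
  have h8 : 2 ^ (8 * s + 1) = 2 * q ^ 8 := by
    rw [pow_succ, hq, ← pow_mul]; ring
  rw [h8]
  obtain ⟨m, rfl⟩ : ∃ m, n = m + 2 := ⟨n - 2, by
    have : 0 < q ^ 2 := by positivity
    omega⟩
  have hm : q ^ 3 ≤ 2 * m := by nlinarith
  have h1 : (m + 2) * (m + 2 - 1) * (m + 2 - 2) ≥ m * m * m := by
    apply Nat.mul_le_mul (Nat.mul_le_mul _ _) <;> omega
  have h5 : q ^ 3 * q ^ 3 * q ^ 3 ≤ 2 * m * (2 * m) * (2 * m) :=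
    Nat.mul_le_mul (Nat.mul_le_mul hm hm) hm
  have h6 : 256 * q ^ 8 ≤ q * q ^ 8 := Nat.mul_le_mul_right _ hq256
  have h7 : q ^ 3 * q ^ 3 * q ^ 3 = q * q ^ 8 := by ring
  have h9 : 2 * m * (2 * m) * (2 * m) = 8 * (m * m * m) := by ring
  have h10 : 0 < q ^ 8 := by positivity
  omega

theorem stmt_6 (s : ℕ) (hs : 8 ≤ s) (n : ℕ) (hn : n = (2 ^ (2 * s) + 1) * (2 ^ s - 1))
    (α : GaloisField 2 (4 * s)) (hα : orderOf α = 2 ^ (4 * s) - 1)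
    (β : GaloisField 2 (4 * s)) (hβ : β = α ^ (2 ^ s + 1)) :
    Module.finrank (ZMod 2) (BCHCode n β {0, 1, 2, 3, 4}) = n - 8 * s - 1 ∧
    minDist (BCHCode n β {0, 1, 2, 3, 4}) = 6 ∧
    ∀ D : Submodule (ZMod 2) (Fin n → ZMod 2),
      Module.finrank (ZMod 2) D = n - 8 * s - 1 → minDist D ≤ 6 := by

  have hF : Module.finrank (ZMod 2) (GaloisField 2 (4 * s)) = 4 * s :=
    GaloisField.finrank 2 (by omega)
  obtain ⟨q, hq, hq256, h2, h3, h4, e1, e2, e3, e4⟩ := aux_n s hs n hn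
  have hβn : orderOf β = n := by
    have hα' : orderOf α = n * (2 ^ s + 1) := by rw [hα, h4, ← hq]; omega
    rw [hβ, orderOf_pow_of_dvd (by omega) (by rw [hα']; exact dvd_mul_left _ _), hα']
    exact Nat.mul_div_cancel _ (by positivity)
  have hch := aux_choose s hs n hn
  have hrank : Module.finrank (ZMod 2) (BCHCode n β {0, 1, 2, 3, 4}) = n - 8 * s - 1 := by
    have hsurj := aux_surj s hs hF n hn β hβn
    have h := LinearMap.finrank_range_add_finrank_ker
      ((parMap n).prod ((synMap n β 1).prod (synMap n β 3)))
    rw [LinearMap.range_eq_top.2 hsurj, finrank_top, ← aux_ker] at h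
    simp only [Module.finrank_prod, hF, Module.finrank_self, Module.finrank_fin_fun] at h
    omega
  have hle : ∀ D : Submodule (ZMod 2) (Fin n → ZMod 2),
      Module.finrank (ZMod 2) D = n - 8 * s - 1 → minDist D ≤ 6 := by
    intro D hD
    obtain ⟨c, hc, hc0, hc6⟩ := aux_pack n (8 * s + 1) hch D (by omega)
    exact le_trans (Nat.sInf_le ⟨c, hc, hc0, rfl⟩) hc6
  refine ⟨hrank, le_antisymm (hle _ hrank) ?_, hle⟩
  obtain ⟨c, hc, hc0, _⟩ := aux_pack n (8 * s + 1) hch (BCHCode n β {0, 1, 2, 3, 4}) (by omega)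
  refine le_csInf ⟨_, c, hc, hc0, rfl⟩ ?_
  rintro w ⟨d, hd, hd0, rfl⟩
  exact aux_bch_bound n β hβn d hd hd0
end

section
/- Let s ≥ 4. The code C_{(2,n,5,1)} has length n, dimension n − 8s, and minimum distance d satisfying 5 ≤ d ≤ 6. -/
open Finset

lemma aux_numA (s k : ℕ) (hs : 4 ≤ s) (hk0 : 0 < k) (hk : k < 4 * s) :
    ¬ ((((2:ℤ) ^ s) ^ 2 + 1) * (2 ^ s - 1)) ∣ 3 * (2 ^ k - 1) := by
  have hq : (16:ℤ) ≤ 2 ^ s := by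
    calc (16:ℤ) = 2 ^ 4 := by norm_num
      _ ≤ 2 ^ s := pow_le_pow_right₀ (by norm_num) hs
  have key : ∀ (q x : ℤ), 16 ≤ q → ((q^2+1)*(q-1)) ∣ x → 0 < x → x < 2 * ((q^2+1)*(q-1)) →
      x = (q^2+1)*(q-1) := by
    rintro q x hq ⟨m, rfl⟩ h1 h2
    have hN : 0 < (q^2+1)*(q-1) := by
      apply mul_pos <;> nlinarith
    have h3 : 0 < m := by
      by_contra h; push Not at h; nlinarith
    have h4 : m < 2 := by
      by_contra h; push Not at h; nlinarith
    have : m = 1 := by omega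
    simp [this]
  intro h
  have hk1 : (2:ℤ) ≤ 2 ^ k := by
    calc (2:ℤ) = 2 ^ 1 := by norm_num
      _ ≤ 2 ^ k := pow_le_pow_right₀ (by norm_num) hk0
  have h3s : (2:ℤ) ^ (3 * s) = (2 ^ s) ^ 3 := by rw [mul_comm, pow_mul]
  rcases lt_or_ge k (3 * s) with hlt | hge
  · rcases Nat.lt_or_ge (k + 1) (3 * s) with h1 | h1
    · have h2 : (4:ℤ) * 2 ^ k ≤ (2 ^ s) ^ 3 := by
        rw [← h3s]
        calc (4:ℤ) * 2 ^ k = 2 ^ (k + 2) := by ring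
          _ ≤ _ := pow_le_pow_right₀ (by norm_num) (by omega)
      generalize (2:ℤ) ^ s = q at *
      generalize (2:ℤ) ^ k = t at *
      have := key q _ hq h (by linarith) (by nlinarith)
      nlinarith
    · have h2 : (2:ℤ) * 2 ^ k = (2 ^ s) ^ 3 := by
        rw [← h3s]
        have : 3 * s = k + 1 := by omega
        rw [this]; ring
      generalize (2:ℤ) ^ s = q at *
      generalize (2:ℤ) ^ k = t at *
      have := key q _ hq h (by linarith) (by nlinarith)
      nlinarith
  · obtain ⟨j, rfl⟩ := Nat.exists_eq_add_of_le hge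
    have hu : (1:ℤ) ≤ 2 ^ j := one_le_pow₀ (by norm_num)
    rw [pow_add, h3s] at h hk1
    rcases Nat.lt_or_ge (j + 1) s with h1 | h1
    · have h2 : (4:ℤ) * 2 ^ j ≤ 2 ^ s := by
        calc (4:ℤ) * 2 ^ j = 2 ^ (j + 2) := by ring
          _ ≤ _ := pow_le_pow_right₀ (by norm_num) (by omega)
      generalize (2:ℤ) ^ s = q at *
      generalize (2:ℤ) ^ j = u at *
      have h' : ((q^2+1)*(q-1)) ∣ 3 * (u * (q^2 - q + 1) - 1) := by
        obtain ⟨m, hm⟩ := h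
        exact ⟨m - 3 * u, by linear_combination hm⟩
      have h5 : 4 * (u * (q^2-q+1)) ≤ q * (q^2-q+1) := by
        rw [← mul_assoc]; exact mul_le_mul_of_nonneg_right h2 (by nlinarith)
      have h6 : 1 * (q^2-q+1) ≤ u * (q^2-q+1) := mul_le_mul_of_nonneg_right hu (by nlinarith)
      have := key q _ hq h' (by nlinarith) (by nlinarith)
      nlinarith
    · have h2 : (2:ℤ) * 2 ^ j = 2 ^ s := by
        have : s = j + 1 := by omega
        rw [this]; ring
      generalize (2:ℤ) ^ s = q at *
      generalize (2:ℤ) ^ j = u at *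
      subst h2
      have h' : (((2*u)^2+1)*((2*u)-1)) ∣ 3 * (u * ((2*u)^2 - 2*u + 1) - 1) := by
        obtain ⟨m, hm⟩ := h
        exact ⟨m - 3 * u, by linear_combination hm⟩
      have hu3 : 8 ≤ u := by linarith
      have hu4 : 64 ≤ u * u := by nlinarith
      have hu5 : 8 * (u * u) ≤ u * (u * u) := by nlinarith
      have := key (2*u) _ hq h' (by nlinarith) (by nlinarith)
      nlinarith

lemma aux_numB (s k : ℕ) (hs : 4 ≤ s) (hk : k < 4 * s) :
    ¬ ((((2:ℤ) ^ s) ^ 2 + 1) * (2 ^ s - 1)) ∣ 3 - 2 ^ k := by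
  have hq : (16:ℤ) ≤ 2 ^ s := by
    calc (16:ℤ) = 2 ^ 4 := by norm_num
      _ ≤ 2 ^ s := pow_le_pow_right₀ (by norm_num) hs
  intro h
  have h3s : (2:ℤ) ^ (3 * s) = (2 ^ s) ^ 3 := by rw [mul_comm, pow_mul]
  have key : ∀ (q x : ℤ), 16 ≤ q → ((q^2+1)*(q-1)) ∣ x → 0 < x → x < ((q^2+1)*(q-1)) →
      False := by
    intro q x hq hd h1 h2
    have := Int.le_of_dvd h1 hd
    linarith
  have h' := (dvd_neg.mpr h)
  rw [neg_sub] at h'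
  rcases Nat.lt_or_ge k 2 with hk2 | hk2
  · have ht : (2:ℤ) ^ k ≤ 2 := by
      calc (2:ℤ) ^ k ≤ 2 ^ 1 := pow_le_pow_right₀ (by norm_num) (by omega)
        _ = 2 := by norm_num
    have ht1 : (1:ℤ) ≤ 2 ^ k := one_le_pow₀ (by norm_num)
    generalize (2:ℤ) ^ s = q at *
    generalize (2:ℤ) ^ k = t at *
    exact key q _ hq h (by linarith) (by nlinarith)
  have ht : (4:ℤ) ≤ 2 ^ k := by
    calc (4:ℤ) = 2 ^ 2 := by norm_num
      _ ≤ 2 ^ k := pow_le_pow_right₀ (by norm_num) hk2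
  rcases lt_or_ge k (3 * s) with hlt | hge
  · have h2 : (2:ℤ) * 2 ^ k ≤ (2 ^ s) ^ 3 := by
      rw [← h3s]
      calc (2:ℤ) * 2 ^ k = 2 ^ (k + 1) := by ring
        _ ≤ _ := pow_le_pow_right₀ (by norm_num) (by omega)
    generalize (2:ℤ) ^ s = q at *
    generalize (2:ℤ) ^ k = t at *
    exact key q _ hq h' (by linarith) (by nlinarith)
  · obtain ⟨j, rfl⟩ := Nat.exists_eq_add_of_le hge
    have hu : (1:ℤ) ≤ 2 ^ j := one_le_pow₀ (by norm_num)
    rw [pow_add, h3s] at h'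
    have h2 : (2:ℤ) * 2 ^ j ≤ 2 ^ s := by
      calc (2:ℤ) * 2 ^ j = 2 ^ (j + 1) := by ring
        _ ≤ _ := pow_le_pow_right₀ (by norm_num) (by omega)
    clear ht h
    generalize (2:ℤ) ^ s = q at *
    generalize (2:ℤ) ^ j = u at *
    have h'' : ((q^2+1)*(q-1)) ∣ u * (q^2 - q + 1) - 3 := by
      obtain ⟨m, hm⟩ := h'
      exact ⟨m - u, by linear_combination hm⟩
    have h5 : 2 * (u * (q^2-q+1)) ≤ q * (q^2-q+1) := by
      rw [← mul_assoc]; exact mul_le_mul_of_nonneg_right h2 (by nlinarith)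
    have h6 : 1 * (q^2-q+1) ≤ u * (q^2-q+1) := mul_le_mul_of_nonneg_right hu (by nlinarith)
    exact key q _ hq h'' (by nlinarith) (by nlinarith)

lemma aux_frob {F : Type} [Field F] [Algebra (ZMod 2) F] (P : Polynomial (ZMod 2)) (x : F)
    (h : Polynomial.aeval x P = 0) (j : ℕ) : Polynomial.aeval (x ^ 2 ^ j) P = 0 := by
  induction j with
  | zero => simpa using h
  | succ j ih =>
    rw [pow_succ, pow_mul, ← Polynomial.expand_aeval, ZMod.expand_card, map_pow, ih]
    simp

/-- The conjugates of the two zeros are distinct -/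
lemma aux_inj {F : Type} [Field F] [CharP F 2] (s n : ℕ) (hs : 4 ≤ s)
    (hn : (n : ℤ) = (((2:ℤ) ^ s) ^ 2 + 1) * (2 ^ s - 1)) (β : F) (hβ : orderOf β = n)
    (hn0 : n ≠ 0)
    (hfix : ∀ x : F, x ^ 2 ^ (4 * s) = x) :
    Function.Injective (Sum.elim (fun j : Fin (4 * s) => β ^ 2 ^ (j : ℕ))
      (fun j : Fin (4 * s) => (β ^ 3) ^ 2 ^ (j : ℕ))) := by
  have hfr : ∀ (i : ℕ) (x y : F), x ^ 2 ^ i = y ^ 2 ^ i → x = y := by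
    intro i x y h
    exact iterateFrobenius_inj F 2 i (by simpa [iterateFrobenius_def] using h)
  have hsplit : ∀ (i j : ℕ) (x y : F), i ≤ j → x ^ 2 ^ i = y ^ 2 ^ j → x = y ^ 2 ^ (j - i) := by
    intro i j x y hij h
    apply hfr i
    rw [h, ← pow_mul, ← pow_add, Nat.sub_add_cancel hij]
  have hmod : ∀ a b : ℕ, β ^ a = β ^ b → (n : ℤ) ∣ b - a := by
    intro a b h
    have hfin : IsOfFinOrder β := by
      rw [← orderOf_pos_iff, hβ]; omega
    rw [hfin.pow_eq_pow_iff_modEq, hβ] at h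
    exact (Nat.modEq_iff_dvd).1 h
  have hA : ∀ (e i j : ℕ), (e = 1 ∨ e = 3) → i < j → j < 4 * s →
      (β ^ e) ^ 2 ^ i ≠ (β ^ e) ^ 2 ^ j := by
    intro e i j he hij hj h
    have h1 := hsplit i j _ _ hij.le h
    rw [← pow_mul] at h1
    have h2 := hmod _ _ h1
    apply aux_numA s (j - i) hs (by omega) (by omega)
    rw [← hn]
    push_cast at h2
    rcases he with rfl | rfl
    · obtain ⟨m, hm⟩ := h2
      exact ⟨3 * m, by push_cast at hm; linear_combination 3 * hm⟩
    · obtain ⟨m, hm⟩ := h2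
      exact ⟨m, by push_cast at hm; linear_combination hm⟩
  have hA' : ∀ (e i j : ℕ), (e = 1 ∨ e = 3) → i < 4 * s → j < 4 * s →
      (β ^ e) ^ 2 ^ i = (β ^ e) ^ 2 ^ j → i = j := by
    intro e i j he hi hj h
    rcases lt_trichotomy i j with h1 | h1 | h1
    · exact absurd h (hA e i j he h1 hj)
    · exact h1
    · exact absurd h.symm (hA e j i he h1 hi)
  have hB0 : ∀ k, k < 4 * s → β ^ 2 ^ k ≠ β ^ 3 := by
    intro k hk h
    apply aux_numB s k hs hk
    rw [← hn]
    have := hmod _ _ h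
    push_cast at this
    exact this
  have hB : ∀ (i j : ℕ), i < 4 * s → j < 4 * s → β ^ 2 ^ i ≠ (β ^ 3) ^ 2 ^ j := by
    intro i j hi hj h
    rcases Nat.lt_or_ge i j with h1 | h1
    · have h2 := hsplit i j _ _ h1.le h
      apply hB0 (4 * s - (j - i)) (by omega)
      have h3 := congrArg (fun x => x ^ 2 ^ (4 * s - (j - i))) h2
      rw [h3, ← pow_mul (β ^ 3), ← pow_add,
        show (j - i) + (4 * s - (j - i)) = 4 * s by omega, hfix]
    · have h2 := hsplit j i _ _ h1 h.symm
      exact hB0 (i - j) (by omega) h2.symm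
  rintro (i | i) (j | j) h
  · simp only [Sum.elim_inl] at h
    congr 1; ext
    exact hA' 1 i j (Or.inl rfl) i.2 j.2 (by simpa using h)
  · exact absurd h (hB i j i.2 j.2)
  · exact absurd h.symm (hB j i j.2 i.2)
  · simp only [Sum.elim_inr] at h
    congr 1; ext
    exact hA' 3 i j (Or.inr rfl) i.2 j.2 h

/-- syndrome map -/
noncomputable def auxSyn {F : Type} [Field F] [Algebra (ZMod 2) F] (n : ℕ) (β : F) :
    (Fin n → ZMod 2) →ₗ[ZMod 2] F × F :=
  (Fintype.linearCombination (ZMod 2) (fun i : Fin n => β ^ (i : ℕ))).prod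
    (Fintype.linearCombination (ZMod 2) (fun i : Fin n => (β ^ 3) ^ (i : ℕ)))

lemma auxSyn_apply {F : Type} [Field F] [Algebra (ZMod 2) F] (n : ℕ) (β : F)
    (c : Fin n → ZMod 2) :
    auxSyn n β c = (∑ i, c i • β ^ (i : ℕ), ∑ i, c i • (β ^ 3) ^ (i : ℕ)) := by
  simp [auxSyn, Fintype.linearCombination_apply]

lemma mem_code {F : Type} [Field F] [Algebra (ZMod 2) F] (n : ℕ) (β : F)
    (c : Fin n → ZMod 2) : c ∈ BCHCode n β {1, 3} ↔
      (∑ i, c i • β ^ (i : ℕ) = 0 ∧ ∑ i, c i • (β ^ 3) ^ (i : ℕ) = 0) := by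
  change (∀ j ∈ ({1, 3} : Finset ℕ), ∑ i : Fin n, c i • β ^ (j * (i : ℕ)) = 0) ↔ _
  simp [pow_mul]

lemma code_eq_ker {F : Type} [Field F] [Algebra (ZMod 2) F] (n : ℕ) (β : F) :
    BCHCode n β {1, 3} = LinearMap.ker (auxSyn n β) := by
  ext c
  rw [mem_code, LinearMap.mem_ker, auxSyn_apply, Prod.mk_eq_zero]

open Polynomial in
lemma auxSyn_surj {F : Type} [Field F] [Algebra (ZMod 2) F] [FiniteDimensional (ZMod 2) F]
    (s n : ℕ) (hs : 0 < s) (hF : Module.finrank (ZMod 2) F = 4 * s) (β : F) (hn : 8 * s ≤ n)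
    (hinj : Function.Injective (Sum.elim (fun j : Fin (4 * s) => β ^ 2 ^ (j : ℕ))
      (fun j : Fin (4 * s) => (β ^ 3) ^ 2 ^ (j : ℕ)))) :
    Function.Surjective (auxSyn n β) := by
  let Ψ : degreeLT (ZMod 2) (8 * s) →ₗ[ZMod 2] F × F :=
    ((aeval β).toLinearMap.prod (aeval (β ^ 3)).toLinearMap).comp (Submodule.subtype _)
  have hΨ : Function.Injective Ψ := by
    rw [← LinearMap.ker_eq_bot, LinearMap.ker_eq_bot']
    rintro ⟨P, hP⟩ h
    have h1 : aeval β P = 0 := congrArg Prod.fst h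
    have h2 : aeval (β ^ 3) P = 0 := congrArg Prod.snd h
    have hdeg : P.natDegree < 8 * s := by
      by_cases hP0 : P = 0
      · simp [hP0]; omega
      · rw [mem_degreeLT] at hP
        exact (natDegree_lt_iff_degree_lt hP0).2 hP
    have h0 : P.map (algebraMap (ZMod 2) F) = 0 := by
      refine eq_zero_of_natDegree_lt_card_of_eval_eq_zero _ hinj ?_ ?_
      · rintro (j | j)
        · simpa [aeval_def, eval_map] using aux_frob P β h1 j
        · simpa [aeval_def, eval_map] using aux_frob P (β ^ 3) h2 j
      · rw [natDegree_map]
        simp; omega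
    have : P = 0 := (Polynomial.map_eq_zero _).1 h0
    simpa using this
  have hsurj : Function.Surjective Ψ := by
    haveI : FiniteDimensional (ZMod 2) (degreeLT (ZMod 2) (8 * s)) :=
      (degreeLTEquiv (ZMod 2) (8 * s)).symm.finiteDimensional
    refine (LinearMap.injective_iff_surjective_of_finrank_eq_finrank ?_).1 hΨ
    rw [(degreeLTEquiv (ZMod 2) (8 * s)).finrank_eq, Module.finrank_prod, hF]
    simp; omega
  intro y
  obtain ⟨⟨P, hP⟩, rfl⟩ := hsurj y
  have hdeg : P.natDegree < n := by
    by_cases hP0 : P = 0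
    · simp [hP0]; omega
    · rw [mem_degreeLT] at hP
      exact lt_of_lt_of_le ((natDegree_lt_iff_degree_lt hP0).2 hP) hn
  refine ⟨fun i => P.coeff i, ?_⟩
  rw [auxSyn_apply]
  have : ∀ x : F, ∑ i : Fin n, P.coeff (i : ℕ) • x ^ (i : ℕ) = aeval x P := by
    intro x
    rw [aeval_eq_sum_range' hdeg, Fin.sum_univ_eq_sum_range (fun i => P.coeff i • x ^ i)]
  rw [this, this]
  rfl

open Polynomial in
lemma aux_lower {F : Type} [Field F] [Algebra (ZMod 2) F] (n : ℕ) (β : F)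
    (hβ : orderOf β = n) (hn : n ≠ 0) (c : Fin n → ZMod 2) (hc : c ∈ BCHCode n β {1, 3})
    (hc0 : c ≠ 0) : 5 ≤ hammingNorm c := by
  classical
  haveI : CharP F 2 := charP_of_injective_algebraMap (algebraMap (ZMod 2) F).injective 2
  rw [mem_code] at hc
  obtain ⟨hc1, hc3⟩ := hc
  have hβ0 : β ≠ 0 := by
    rintro rfl
    rw [orderOf_zero] at hβ; omega
  set S : Finset (Fin n) := Finset.univ.filter (fun i => c i ≠ 0) with hS
  have hnorm : hammingNorm c = S.card := rfl
  rw [hnorm]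
  by_contra hlt
  have hred : ∀ f : Fin n → F, ∑ i, c i • f i = ∑ i ∈ S, f i := by
    intro f
    rw [hS, Finset.sum_filter]
    apply Finset.sum_congr rfl
    intro i _
    have : c i = 0 ∨ c i = 1 := by generalize c i = a; revert a; decide
    rcases this with h | h <;> simp [h]
  rw [hred] at hc1 hc3
  have hsq : ∀ f : Fin n → F, ∑ i ∈ S, f i = 0 → ∑ i ∈ S, f i ^ 2 = 0 := by
    intro f h
    rw [← sum_pow_char 2, h]; simp
  have hp1 : ∑ i ∈ S, (β ^ (i:ℕ)) ^ 1 = 0 := by simpa using hc1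
  have hp3 : ∑ i ∈ S, (β ^ (i:ℕ)) ^ 3 = 0 := by
    rw [← hc3]; exact Finset.sum_congr rfl fun i _ => by ring
  have hp2 : ∑ i ∈ S, (β ^ (i:ℕ)) ^ 2 = 0 := hsq _ hc1
  have hp4 : ∑ i ∈ S, (β ^ (i:ℕ)) ^ 4 = 0 := by
    rw [← hsq _ hp2]; exact Finset.sum_congr rfl fun i _ => by ring
  have hpoly : ∀ Q : F[X], Q.natDegree < 4 → ∑ i ∈ S, (X * Q).eval (β ^ (i:ℕ)) = 0 := by
    intro Q hQ
    have : ∀ x : F, (X * Q).eval x =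
        Q.coeff 0 * x ^ 1 + Q.coeff 1 * x ^ 2 + Q.coeff 2 * x ^ 3 + Q.coeff 3 * x ^ 4 := by
      intro x
      rw [eval_mul, eval_X, eval_eq_sum_range' hQ]
      simp [Finset.sum_range_succ]; ring
    simp only [this, Finset.sum_add_distrib, ← Finset.mul_sum, hp1, hp2, hp3, hp4]
    simp
  obtain ⟨i0, hi0⟩ : ∃ i, c i ≠ 0 := by
    by_contra h; push Not at h; exact hc0 (funext h)
  have hi0S : i0 ∈ S := by simp [hS, hi0]
  let Q : F[X] := ∏ i ∈ S.erase i0, (X - C (β ^ (i:ℕ)))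
  have hQdeg : Q.natDegree < 4 := by
    have : Q.natDegree = (S.erase i0).card := by
      rw [show Q = ∏ i ∈ S.erase i0, (X - C (β ^ (i:ℕ))) from rfl,
        natDegree_prod_of_monic _ _ (fun (i : Fin n) _ => monic_X_sub_C (β ^ (i:ℕ)))]
      simp only [natDegree_X_sub_C, Finset.sum_const, smul_eq_mul, mul_one]
    rw [this, Finset.card_erase_of_mem hi0S]
    omega
  have h := hpoly Q hQdeg
  rw [Finset.sum_eq_single_of_mem i0 hi0S] at h
  · rw [eval_mul, eval_X] at h
    rcases mul_eq_zero.1 h with h | h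
    · exact pow_ne_zero _ hβ0 h
    · simp only [Q, eval_prod] at h
      obtain ⟨i, hi, h⟩ := Finset.prod_eq_zero_iff.1 h
      simp only [eval_sub, eval_X, eval_C] at h
      have h' : β ^ (i0:ℕ) = β ^ (i:ℕ) := sub_eq_zero.1 h
      have := pow_injOn_Iio_orderOf (x := β) (by simp [hβ]) (by simp [hβ]) h'
      exact (Finset.ne_of_mem_erase hi) (Fin.ext this.symm)
  · intro i hi hne
    rw [eval_mul]
    simp only [Q, eval_prod]
    rw [Finset.prod_eq_zero (Finset.mem_erase.2 ⟨hne, hi⟩) (by simp), mul_zero]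

lemma aux_upper {F : Type} [Field F] [Algebra (ZMod 2) F] [Finite F] (n : ℕ) (β : F)
    (hcard : Nat.card F ^ 2 < n.choose 3) :
    ∃ c ∈ BCHCode n β {1, 3}, c ≠ 0 ∧ hammingNorm c ≤ 6 := by
  classical
  haveI := Fintype.ofFinite F
  let ind : Finset (Fin n) → (Fin n → ZMod 2) := fun S i => if i ∈ S then 1 else 0
  have hlt : (Finset.univ : Finset (F × F)).card <
      (Finset.powersetCard 3 (Finset.univ : Finset (Fin n))).card := by
    rw [Finset.card_powersetCard, Finset.card_univ, Finset.card_univ, Fintype.card_prod,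
      Fintype.card_fin, ← Nat.card_eq_fintype_card, ← sq]
    exact hcard
  obtain ⟨S, hS, T, hT, hne, heq⟩ := Finset.exists_ne_map_eq_of_card_lt_of_maps_to hlt
    (f := fun S => auxSyn n β (ind S)) (fun _ _ => by simp)
  rw [Finset.mem_powersetCard] at hS hT
  refine ⟨ind S - ind T, ?_, ?_, ?_⟩
  · rw [code_eq_ker, LinearMap.mem_ker, map_sub, sub_eq_zero]
    exact heq
  · intro h
    apply hne
    ext i
    have := congrFun (sub_eq_zero.1 h) i
    simp only [ind] at this
    by_cases h1 : i ∈ S <;> by_cases h2 : i ∈ T <;> simp_all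
  · have : hammingNorm (ind S - ind T) ≤ (S ∪ T).card := by
      apply Finset.card_le_card
      intro i hi
      rw [Finset.mem_filter] at hi
      by_contra h
      rw [Finset.mem_union, not_or] at h
      exact hi.2 (by simp [ind, h.1, h.2])
    have := Finset.card_union_le S T
    omega

theorem stmt_7 (s : ℕ) (hs : 4 ≤ s) (n : ℕ) (hn : n = (2 ^ (2 * s) + 1) * (2 ^ s - 1))
    (α : GaloisField 2 (4 * s)) (hα : orderOf α = 2 ^ (4 * s) - 1)
    (β : GaloisField 2 (4 * s)) (hβ : β = α ^ (2 ^ s + 1)) :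
    Module.finrank (ZMod 2) (BCHCode n β {1, 3}) = n - 8 * s ∧
    5 ≤ minDist (BCHCode n β {1, 3}) ∧
    minDist (BCHCode n β {1, 3}) ≤ 6 := by
  have hq : 16 ≤ 2 ^ s := by
    calc 16 = 2 ^ 4 := by norm_num
      _ ≤ 2 ^ s := Nat.pow_le_pow_right (by norm_num) hs
  have hsq : s < 2 ^ s := Nat.lt_two_pow_self
  obtain ⟨p, hp⟩ : ∃ p, 2 ^ s = p + 1 := ⟨2 ^ s - 1, by omega⟩
  have hnp : n = ((p + 1) ^ 2 + 1) * p := by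
    rw [hn, mul_comm 2 s, pow_mul, hp]; simp
  have h4 : 2 ^ (4 * s) = (p + 1) ^ 4 := by rw [mul_comm, pow_mul, hp]
  have hn8 : 8 * s ≤ n := by
    rw [hnp]; nlinarith
  have hn0 : n ≠ 0 := by omega
  have hord : orderOf β = n := by
    have h1 : 2 ^ (4 * s) - 1 = (2 ^ s + 1) * n := by
      rw [h4, hnp, hp]
      apply Nat.sub_eq_of_eq_add
      ring
    rw [hβ, orderOf_pow_of_dvd (by omega) (by rw [hα, h1]; exact Dvd.intro _ rfl), hα, h1]
    exact Nat.mul_div_cancel_left _ (by omega)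
  have hnZ : (n : ℤ) = (((2:ℤ) ^ s) ^ 2 + 1) * (2 ^ s - 1) := by
    have hpZ : (2:ℤ) ^ s = p + 1 := by exact_mod_cast hp
    rw [hnp, hpZ]; push_cast; ring
  have hcardF : Nat.card (GaloisField 2 (4 * s)) = 2 ^ (4 * s) :=
    GaloisField.card 2 (4 * s) (by omega)
  have hfix : ∀ x : GaloisField 2 (4 * s), x ^ 2 ^ (4 * s) = x := by
    intro x
    haveI := Fintype.ofFinite (GaloisField 2 (4 * s))
    rw [← hcardF, Nat.card_eq_fintype_card]
    exact FiniteField.pow_card x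
  have hinj := aux_inj s n hs hnZ β hord hn0 hfix
  have hfr : Module.finrank (ZMod 2) (GaloisField 2 (4 * s)) = 4 * s :=
    GaloisField.finrank 2 (by omega)
  have hsurj := auxSyn_surj s n (by omega) hfr β hn8 hinj
  have hchoose : Nat.card (GaloisField 2 (4 * s)) ^ 2 < n.choose 3 := by
    rw [hcardF, h4]
    have h6 : n.choose 3 * 6 = n * (n - 1) * (n - 2) := by
      have := Nat.descFactorial_eq_factorial_mul_choose n 3
      simp [Nat.descFactorial_succ, Nat.factorial] at this
      rw [mul_comm, ← this]; ring
    have hp15 : 15 ≤ p := by omega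
    obtain ⟨m, hm⟩ : ∃ m, n = m + 2 := ⟨n - 2, by omega⟩
    rw [hm] at h6
    simp only [Nat.add_sub_cancel] at h6
    have hmb : 14 * (p + 1) ^ 3 ≤ 16 * m := by
      have : m + 2 = ((p + 1) ^ 2 + 1) * p := by omega
      nlinarith [mul_le_mul hp15 hp15 (by omega) (by omega), Nat.zero_le (p^2)]
    have h7 : m ^ 3 ≤ (m + 2) * (m + 2 - 1) * m := by
      have : m + 2 - 1 = m + 1 := by omega
      rw [this]; nlinarith [Nat.zero_le (m^2)]
    have h8 : (14 * (p + 1) ^ 3) ^ 3 ≤ (16 * m) ^ 3 := Nat.pow_le_pow_left hmb 3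
    have h9 : 16 * (p + 1) ^ 8 ≤ (p + 1) ^ 9 := by
      rw [pow_succ _ 8, mul_comm]; exact Nat.mul_le_mul_left _ (by omega)
    have h10 : 0 < (p + 1) ^ 8 := by positivity
    have e1 : (14 * (p + 1) ^ 3) ^ 3 = 2744 * (p + 1) ^ 9 := by ring
    have e2 : (16 * m) ^ 3 = 4096 * m ^ 3 := by ring
    have e3 : ((p + 1) ^ 4) ^ 2 = (p + 1) ^ 8 := by ring
    rw [e1, e2] at h8
    rw [e3, hm]
    omega
  obtain ⟨c, hc, hc0, hc6⟩ := aux_upper n β hchoose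
  refine ⟨?_, ?_, ?_⟩
  · have h := LinearMap.finrank_range_add_finrank_ker (auxSyn n β)
    rw [LinearMap.range_eq_top.2 hsurj, finrank_top, Module.finrank_prod, hfr,
      ← code_eq_ker] at h
    simp only [Module.finrank_fin_fun] at h
    omega
  · refine le_csInf (s := {w | ∃ c ∈ BCHCode n β {1, 3}, c ≠ 0 ∧ hammingNorm c = w})
      ⟨_, c, hc, hc0, rfl⟩ ?_
    rintro w ⟨d, hd, hd0, rfl⟩
    exact aux_lower n β hord hn0 d hd hd0
  · exact le_trans (Nat.sInf_le ⟨c, hc, hc0, rfl⟩) hc6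
end
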